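/- For every integer l ≥ 2, the real number (2·e^{1/l}/√l)·∫_0^{1/√l} e^{−t²} dt is transcendental (over ℚ); moreover, the real number e·∫_0^1 e^{−t²} dt is transcendental. -/

import Mathlib

open Real

/-!
With `x = 1 / √l`, the numbers are algebraic multiples of values at rational points of the series
`F = ∑ (2z)ⁱ / (2i + 1)!!`, because `x * F (x²) = exp (x²) * ∫₀ˣ exp (-t²)`. This `F` is an
E-function solving `2 z F' = (2 z - 1) F + 1`, and the Siegel–Shidlovskii method applies to it.
Siegel's lemma gives a nonzero integer polynomial `P` with small coefficients for which `P(z, F)`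
vanishes to high order at `0`. Differentiating along the equation is a derivation on polynomials,
here `kummerDeriv`; its iterates of `P`, evaluated at `(r, F r)`, are tiny but cannot all vanish,
by a zero estimate drawn from the determinant of the iterated derivatives in the basis `1, Y, …`.
Multiplied by a power of the denominator of `r`, a nonvanishing one becomes an integer polynomial
in `F r`, too small for an algebraic number.
-/

open Polynomial
open scoped Nat Polynomial.Bivariate PowerSeries

section KummerDerivation

variable {R : Type*} [CommRing R]

variable (R) in
/-- The derivation `2 X ∂/∂X + ((2 X - 1) Y + 1) ∂/∂Y` of `R[X][Y]`: it describes the action of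
`2 z d/dz` on polynomials in `z` and `f`, where `f` satisfies `2 z f' = (2 z - 1) f + 1`. -/
noncomputable def kummerDeriv : Derivation R R[X][Y] R[X][Y] :=
  (C (2 * X) : R[X][Y]) • PolynomialModule.equivPolynomialSelf.toLinearMap.compDer
      (derivative' (R := R)).mapCoeffs +
    (C (2 * X - 1) * Y + 1 : R[X][Y]) • (derivative' (R := R[X])).restrictScalars R

lemma coeff_kummerDeriv (P : R[X][Y]) (k : ℕ) :
    (kummerDeriv R P).coeff k = 2 * X * derivative (P.coeff k) +
      (k : R[X]) * (2 * X - 1) * P.coeff k + (k + 1 : R[X]) * P.coeff (k + 1) := by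
  have hX : (PolynomialModule.equivPolynomialSelf ((derivative' (R := R)).mapCoeffs P)).coeff k =
      derivative (P.coeff k) := rfl
  have hY : (Y * derivative P).coeff k = k * P.coeff k := by
    cases k with
    | zero => simp
    | succ k => rw [coeff_X_mul, coeff_derivative]; push_cast; ring
  change (C (2 * X) * PolynomialModule.equivPolynomialSelf ((derivative' (R := R)).mapCoeffs P) +
    (C (2 * X - 1) * Y + 1) * derivative P).coeff k = _
  rw [coeff_add, coeff_C_mul, hX, add_mul, coeff_add, mul_assoc (C _) Y, coeff_C_mul, hY, one_mul,
    coeff_derivative]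
  ring

lemma kummerDeriv_C (p : R[X]) : kummerDeriv R (C p) = C (2 * X * derivative p) := by
  ext1 k
  rw [coeff_kummerDeriv]
  cases k <;> simp [coeff_C]

lemma kummerDeriv_C_mul (p : R[X]) (P : R[X][Y]) :
    kummerDeriv R (C p * P) = C p * kummerDeriv R P + C (2 * X * derivative p) * P := by
  rw [Derivation.leibniz, kummerDeriv_C, smul_eq_mul, smul_eq_mul, mul_comm P]

lemma kummerDeriv_Y : kummerDeriv R Y = C (2 * X - 1) * Y + 1 := by
  ext1 k
  rw [coeff_kummerDeriv]
  rcases k with _ | _ | k <;> simp [coeff_X, coeff_one]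

lemma kummerDeriv_map {S : Type*} [CommRing S] (g : R →+* S) (P : R[X][Y]) :
    kummerDeriv S (P.map (mapRingHom g)) = (kummerDeriv R P).map (mapRingHom g) := by
  ext1 k
  simp [coeff_kummerDeriv, derivative_map]

lemma iterate_kummerDeriv_map {S : Type*} [CommRing S] (g : R →+* S) (P : R[X][Y]) (s : ℕ) :
    (kummerDeriv S)^[s] (P.map (mapRingHom g)) = ((kummerDeriv R)^[s] P).map (mapRingHom g) :=
  ((Function.Semiconj.iterate_right (fun Q => (kummerDeriv_map g Q).symm) s) P).symm

lemma natDegree_kummerDeriv_le (P : R[X][Y]) : (kummerDeriv R P).natDegree ≤ P.natDegree := by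
  refine natDegree_le_iff_coeff_eq_zero.mpr fun k hk => ?_
  simp [coeff_kummerDeriv, coeff_eq_zero_of_natDegree_lt hk,
    coeff_eq_zero_of_natDegree_lt (hk.trans k.lt_succ_self)]

lemma natDegree_iterate_kummerDeriv_le (P : R[X][Y]) (s : ℕ) :
    ((kummerDeriv R)^[s] P).natDegree ≤ P.natDegree := by
  induction s with
  | zero => rfl
  | succ s ih =>
    rw [Function.iterate_succ_apply']
    exact (natDegree_kummerDeriv_le _).trans ih

lemma natDegree_coeff_kummerDeriv_le {P : R[X][Y]} {n : ℕ} (hP : ∀ k, (P.coeff k).natDegree ≤ n)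
    (k : ℕ) : ((kummerDeriv R P).coeff k).natDegree ≤ n + 1 := by
  have h := hP k
  have h' := hP (k + 1)
  rw [coeff_kummerDeriv]
  compute_degree
  have := natDegree_derivative_le (P.coeff k)
  omega

lemma natDegree_coeff_iterate_kummerDeriv_le {P : R[X][Y]} {n : ℕ}
    (hP : ∀ k, (P.coeff k).natDegree ≤ n) (s k : ℕ) :
    (((kummerDeriv R)^[s] P).coeff k).natDegree ≤ n + s := by
  induction s generalizing k with
  | zero => exact hP k
  | succ s ih =>
    rw [Function.iterate_succ_apply']
    exact natDegree_coeff_kummerDeriv_le ih k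

end KummerDerivation

lemma coeff_X_mul_derivative {R : Type*} [Semiring R] (p : R[X]) (i : ℕ) :
    (X * derivative p).coeff i = p.coeff i * i := by
  cases i with
  | zero => simp
  | succ i => rw [coeff_X_mul, coeff_derivative]; push_cast; rfl

lemma coeff_add_mul_of_X_pow_dvd {R : Type*} [CommSemiring R] {u v : R⟦X⟧} {a b : ℕ}
    (hu : PowerSeries.X ^ a ∣ u) (hv : PowerSeries.X ^ b ∣ v) :
    PowerSeries.coeff (a + b) (u * v) = PowerSeries.coeff a u * PowerSeries.coeff b v := by
  obtain ⟨u, rfl⟩ := hu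
  obtain ⟨v, rfl⟩ := hv
  rw [mul_mul_mul_comm, ← pow_add]
  simp [PowerSeries.coeff_X_pow_mul']

section EulerDerivation

variable {R : Type*} [CommRing R]

variable (R) in
/-- The derivation `2 z d/dz` of power series, for which both the differential equation of
`kummerSeries` and the coefficients of iterated derivatives are simplest. -/
noncomputable def eulerDeriv : Derivation R R⟦X⟧ R⟦X⟧ :=
  (2 * PowerSeries.X : R⟦X⟧) • PowerSeries.derivative R

lemma coeff_eulerDeriv (F : R⟦X⟧) (i : ℕ) :
    PowerSeries.coeff i (eulerDeriv R F) = 2 * i * PowerSeries.coeff i F := by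
  rw [eulerDeriv, Derivation.smul_apply, smul_eq_mul, mul_assoc, ← map_ofNat PowerSeries.C,
    PowerSeries.coeff_C_mul]
  cases i with
  | zero => simp
  | succ i =>
    rw [PowerSeries.coeff_succ_X_mul, PowerSeries.coeff_derivative]
    push_cast
    ring

lemma coeff_iterate_eulerDeriv (F : R⟦X⟧) (s i : ℕ) :
    PowerSeries.coeff i ((eulerDeriv R)^[s] F) = (2 * i) ^ s * PowerSeries.coeff i F := by
  induction s with
  | zero => simp
  | succ s ih => rw [Function.iterate_succ_apply', coeff_eulerDeriv, ih]; ring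

lemma eulerDeriv_coe (p : R[X]) : eulerDeriv R (p : R⟦X⟧) =
      2 * PowerSeries.X * ((derivative p : R[X]) : R⟦X⟧) := by
  rw [eulerDeriv, Derivation.smul_apply, PowerSeries.derivative_coe, smul_eq_mul]

lemma X_pow_dvd_eulerDeriv {F : R⟦X⟧} {n : ℕ} (h : PowerSeries.X ^ n ∣ F) :
    PowerSeries.X ^ n ∣ eulerDeriv R F := by
  rw [PowerSeries.X_pow_dvd_iff] at h ⊢
  intro i hi
  rw [coeff_eulerDeriv, h i hi, mul_zero]

end EulerDerivation

section KummerSeries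

variable (K : Type*) [Field K]

/-- The power series `∑ 4 ^ i * i! / (2 * i + 1)! * z ^ i`, which is Kummer's function
`₁F₁(1; 3/2; z)`. -/
noncomputable def kummerSeries : K⟦X⟧ :=
  PowerSeries.mk fun i => 4 ^ i * (i ! : K) / ((2 * i + 1)! : K)

variable {K}

lemma constantCoeff_kummerSeries : PowerSeries.constantCoeff (kummerSeries K) = 1 := by
  simp [kummerSeries, ← PowerSeries.coeff_zero_eq_constantCoeff_apply]

variable [CharZero K]

lemma coeff_kummerSeries_ne_zero (i : ℕ) : PowerSeries.coeff i (kummerSeries K) ≠ 0 := by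
  simp [kummerSeries, Nat.factorial_ne_zero]

lemma coeff_succ_kummerSeries (i : ℕ) : (2 * i + 3) * PowerSeries.coeff (i + 1) (kummerSeries K) =
    2 * PowerSeries.coeff i (kummerSeries K) := by
  have h : ((2 * i + 1)! : K) ≠ 0 := by exact_mod_cast Nat.factorial_ne_zero _
  have h1 : (2 * i + 1 + 1 : K) ≠ 0 := by exact_mod_cast (2 * i + 1).succ_ne_zero
  have h2 : (2 * i + 1 + 1 + 1 : K) ≠ 0 := by exact_mod_cast (2 * i + 2).succ_ne_zero
  rw [kummerSeries, PowerSeries.coeff_mk, PowerSeries.coeff_mk,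
    show 2 * (i + 1) + 1 = 2 * i + 1 + 1 + 1 by ring, Nat.factorial_succ (2 * i + 1 + 1),
    Nat.factorial_succ (2 * i + 1), Nat.factorial_succ i]
  push_cast
  field_simp
  ring

lemma eulerDeriv_kummerSeries :
    eulerDeriv K (kummerSeries K) = (2 * PowerSeries.X - 1) * kummerSeries K + 1 := by
  ext i
  rw [coeff_eulerDeriv, sub_mul, one_mul, mul_assoc 2 PowerSeries.X, map_add, map_sub,
    ← map_ofNat PowerSeries.C, PowerSeries.coeff_C_mul]
  cases i with
  | zero => simp [constantCoeff_kummerSeries]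
  | succ i =>
    rw [PowerSeries.coeff_succ_X_mul, PowerSeries.coeff_one, if_neg i.succ_ne_zero]
    push_cast
    linear_combination coeff_succ_kummerSeries (K := K) i

lemma coe_mul_kummerSeries_ne_coe_of_X_mul_derivative {p : K[X]} (hp : p ≠ 0) {n : ℕ}
    (h : X * derivative p = C (n : K) * p) (q : K[X]) : (p : K⟦X⟧) * kummerSeries K ≠ q := by
  intro hq
  have hcoeff (i : ℕ) (hi : i ≠ n) : p.coeff i = 0 := by
    have := congrArg (fun r : K[X] => r.coeff i) h
    simp only [coeff_X_mul_derivative, coeff_C_mul, mul_comm (n : K)] at this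
    exact (mul_eq_mul_left_iff.mp this).resolve_left (by exact_mod_cast hi)
  have hmono : p = C (p.coeff n) * X ^ n := by
    ext i
    rw [coeff_C_mul_X_pow]
    split_ifs with hi
    · rw [hi]
    · exact hcoeff i hi
  have hn : p.coeff n ≠ 0 := fun h0 => hp (by rw [hmono, h0, C_0, zero_mul])
  have hzero := congrArg (PowerSeries.coeff (q.natDegree + 1 + n)) hq
  rw [hmono, coe_mul, coe_C, coe_pow, coe_X, mul_assoc, PowerSeries.coeff_C_mul,
    PowerSeries.coeff_X_pow_mul, coeff_coe,
    coeff_eq_zero_of_natDegree_lt (p := q) (by omega)] at hzero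
  exact mul_ne_zero hn (coeff_kummerSeries_ne_zero _) hzero

/-- Multiplying by `2 z d/dz` and subtracting turns a relation `p f = q` into one with `p` replaced
by `X p' - (deg p) p`, which has smaller degree. -/
theorem coe_mul_kummerSeries_ne_coe {p : K[X]} (hp : p ≠ 0) (q : K[X]) :
    (p : K⟦X⟧) * kummerSeries K ≠ q := by
  induction hn : p.natDegree using Nat.strong_induction_on generalizing p q with
  | _ n ih =>
    intro hq
    by_cases h0 : X * derivative p - C (n : K) * p = 0
    · exact coe_mul_kummerSeries_ne_coe_of_X_mul_derivative
        hp (sub_eq_zero.mp h0) q hq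
    have hlt : (X * derivative p - C (n : K) * p).natDegree < n := by
      rw [natDegree_lt_iff_degree_lt h0, degree_lt_iff_coeff_zero]
      intro i hi
      rw [coeff_sub, coeff_X_mul_derivative, coeff_C_mul]
      rcases hi.eq_or_lt with rfl | hi
      · ring
      · rw [coeff_eq_zero_of_natDegree_lt (hn ▸ hi)]; ring
    refine ih _ ((natDegree_C_mul two_ne_zero).trans_lt hlt)
      (mul_ne_zero (C_ne_zero.mpr two_ne_zero) h0)
      (C 2 * X * derivative q - (C 2 * X - 1) * q - p - C 2 * C (n : K) * q) rfl ?_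
    have hderiv := congrArg (eulerDeriv K) hq
    rw [Derivation.leibniz, eulerDeriv_coe, eulerDeriv_coe, eulerDeriv_kummerSeries] at hderiv
    push_cast
    simp only [smul_eq_mul, map_ofNat] at hderiv ⊢
    linear_combination hderiv - (2 * PowerSeries.X - 1) * hq - 2 * PowerSeries.C (n : K) * hq

/-- Comparing lowest-order terms, `2 ord g = 2 ord p - 1` unless `g = 0`. -/
lemma eq_zero_of_mul_eulerDeriv_eq {p g : K⟦X⟧} (hp : p ≠ 0)
    (h : p * eulerDeriv K g = (eulerDeriv K p + (2 * PowerSeries.X - 1) * p) * g) : g = 0 := by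
  by_contra hg
  have hcoeff := congrArg (PowerSeries.coeff (p.order.toNat + g.order.toNat)) h
  have hp_dvd : PowerSeries.X ^ p.order.toNat ∣ p := PowerSeries.X_pow_order_dvd
  have hg_dvd : PowerSeries.X ^ g.order.toNat ∣ g := PowerSeries.X_pow_order_dvd
  rw [coeff_add_mul_of_X_pow_dvd hp_dvd (X_pow_dvd_eulerDeriv hg_dvd), coeff_eulerDeriv,
    coeff_add_mul_of_X_pow_dvd (dvd_add (X_pow_dvd_eulerDeriv hp_dvd) (hp_dvd.mul_left _)) hg_dvd,
    map_add, coeff_eulerDeriv] at hcoeff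
  have hlow : PowerSeries.coeff p.order.toNat ((2 * PowerSeries.X - 1) * p) =
      -PowerSeries.coeff p.order.toNat p := by
    have h0 : PowerSeries.coeff 0 (2 * PowerSeries.X - 1 : K⟦X⟧) = -1 := by simp
    have := coeff_add_mul_of_X_pow_dvd (a := 0) (u := (2 * PowerSeries.X - 1 : K⟦X⟧))
      (by simp) hp_dvd
    rw [h0, zero_add] at this
    rw [this, neg_one_mul]
  rw [hlow] at hcoeff
  have hparity : ((2 * g.order.toNat + 1 : ℕ) : K) = (2 * p.order.toNat : ℕ) := by
    refine mul_right_cancel₀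
      (mul_ne_zero (PowerSeries.coeff_order hp) (PowerSeries.coeff_order hg)) ?_
    push_cast
    linear_combination hcoeff
  have := Nat.cast_injective hparity
  omega

/-- The equation solved by `q / p` when the left side vanishes is the one satisfied by `-m f`, so
`q + m p f` solves the homogeneous equation. -/
theorem two_X_mul_wronskian_sub_ne_zero {p : K[X]} (hp : p ≠ 0) (q : K[X]) {m : ℕ} (hm : m ≠ 0) :
    2 * X * wronskian p q - (2 * X - 1) * p * q + (m : K[X]) * p ^ 2 ≠ 0 := by
  intro h
  have hg : (q : K⟦X⟧) + m * p * kummerSeries K = 0 := by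
    refine eq_zero_of_mul_eulerDeriv_eq (p := p) (by simpa using hp) ?_
    have hK := congrArg (coeToPowerSeries.ringHom (R := K)) h
    simp only [wronskian, map_add, map_sub, map_mul, map_pow, map_natCast, map_ofNat, map_one,
      map_zero, coeToPowerSeries.ringHom_apply, coe_X] at hK
    simp only [map_add, Derivation.leibniz, eulerDeriv_kummerSeries, smul_eq_mul,
      Derivation.map_natCast, eulerDeriv_coe]
    linear_combination hK
  refine coe_mul_kummerSeries_ne_coe (mul_ne_zero (Nat.cast_ne_zero.mpr hm) hp) (-q) ?_
  have : ((m : K[X]) : K⟦X⟧) = m := map_natCast (coeToPowerSeries.ringHom (R := K)) m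
  rw [Polynomial.coe_mul, this, Polynomial.coe_neg]
  linear_combination hg

end KummerSeries

section KummerDeterminant

/-- The submodule over `R[X]` spanned by `P` and its first `j` Kummer derivatives. -/
noncomputable def kummerSpan {R : Type*} [CommRing R] (P : R[X][Y]) (j : ℕ) :
    Submodule R[X] R[X][Y] :=
  Submodule.span R[X] ((fun s => (kummerDeriv R)^[s] P) '' Set.Iic j)

lemma kummerSpan_mono {R : Type*} [CommRing R] (P : R[X][Y]) : Monotone (kummerSpan P) :=
  fun _ _ h => Submodule.span_mono (Set.image_mono (Set.Iic_subset_Iic.mpr h))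

lemma kummerDeriv_mem_kummerSpan {R : Type*} [CommRing R] {P Q : R[X][Y]} {j : ℕ}
    (hQ : Q ∈ kummerSpan P j) : kummerDeriv R Q ∈ kummerSpan P (j + 1) := by
  induction hQ using Submodule.span_induction with
  | mem Q hQ =>
    obtain ⟨s, hs, rfl⟩ := hQ
    exact Submodule.subset_span ⟨s + 1, Nat.succ_le_succ hs, Function.iterate_succ_apply' _ _ _⟩
  | zero => simp
  | add Q₁ Q₂ _ _ h₁ h₂ => simpa using add_mem h₁ h₂
  | smul p Q hQ h =>
    rw [smul_eq_C_mul, kummerDeriv_C_mul, ← smul_eq_C_mul, ← smul_eq_C_mul]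
    exact add_mem (Submodule.smul_mem _ _ h)
      (Submodule.smul_mem _ _ (kummerSpan_mono P j.le_succ hQ))

/-- The matrix of the coefficients of `1, Y, ..., Y ^ m` in `P` and its first `m` Kummer
derivatives, where `m` is the degree of `P` in `Y`. -/
noncomputable def kummerMatrix {R : Type*} [CommRing R] (P : R[X][Y]) :
    Matrix (Fin (P.natDegree + 1)) (Fin (P.natDegree + 1)) R[X] :=
  Matrix.of fun i j => ((kummerDeriv R)^[i] P).coeff j

lemma natDegree_det_kummerMatrix_le {R : Type*} [CommRing R] {P : R[X][Y]} {n : ℕ}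
    (hP : ∀ k, (P.coeff k).natDegree ≤ n) :
    (kummerMatrix P).det.natDegree ≤ (P.natDegree + 1) * (n + P.natDegree) := by
  rw [Matrix.det_apply]
  refine natDegree_sum_le_of_forall_le _ _ fun σ _ =>
    (natDegree_smul_le _ _).trans ((natDegree_prod_le _ _).trans ?_)
  calc ∑ i, (kummerMatrix P (σ i) i).natDegree
      ≤ ∑ _ : Fin (P.natDegree + 1), (n + P.natDegree) := Finset.sum_le_sum fun i _ =>
        (natDegree_coeff_iterate_kummerDeriv_le hP _ _).trans (by have := (σ i).is_le; omega)
    _ = (P.natDegree + 1) * (n + P.natDegree) := by simp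

lemma C_det_kummerMatrix {R : Type*} [CommRing R] (P : R[X][Y]) :
    C (kummerMatrix P).det =
      ∑ i, C ((kummerMatrix P).adjugate 0 i) * (kummerDeriv R)^[i] P := by
  ext1 k
  simp only [finsetSum_coeff, coeff_C_mul]
  rcases lt_or_ge P.natDegree k with hk | hk
  · rw [coeff_C_of_ne_zero (by omega), Finset.sum_eq_zero]
    intro i _
    rw [coeff_eq_zero_of_natDegree_lt ((natDegree_iterate_kummerDeriv_le P i).trans_lt hk),
      mul_zero]
  · have := congrFun (congrFun (kummerMatrix P).adjugate_mul 0) ⟨k, Nat.lt_succ_of_le hk⟩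
    simpa [Matrix.mul_apply, Matrix.one_apply, Fin.ext_iff, coeff_C, eq_comm, kummerMatrix]
      using this.symm

variable {K : Type*} [Field K]

/-- Kills the leading coefficient of `kummerDeriv K T` (in `Y`) by subtracting a multiple of
`T`. -/
noncomputable def kummerElim (T : K[X][Y]) : K[X][Y] :=
  C T.leadingCoeff * kummerDeriv K T - C ((kummerDeriv K T).coeff T.natDegree) * T

lemma iterate_kummerElim_mem_kummerSpan (P : K[X][Y]) (j : ℕ) :
    kummerElim^[j] P ∈ kummerSpan P j := by
  induction j with
  | zero =>
    rw [Function.iterate_zero_apply]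
    exact Submodule.subset_span ⟨0, Set.mem_Iic.mpr le_rfl, Function.iterate_zero_apply _ _⟩
  | succ j ih =>
    rw [Function.iterate_succ_apply', kummerElim, ← smul_eq_C_mul, ← smul_eq_C_mul]
    exact Submodule.sub_mem _ (Submodule.smul_mem _ _ (kummerDeriv_mem_kummerSpan ih))
      (Submodule.smul_mem _ _ (kummerSpan_mono P j.le_succ ih))

variable [CharZero K]

lemma natDegree_kummerElim {T : K[X][Y]} {m : ℕ} (hT : T.natDegree = m + 1) :
    kummerElim T ≠ 0 ∧ (kummerElim T).natDegree = m := by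
  have hlead : T.coeff (m + 1) ≠ 0 := by
    rw [← hT]
    exact leadingCoeff_ne_zero.mpr (ne_zero_of_natDegree_gt (n := m) (by omega))
  have hle : (kummerElim T).natDegree ≤ m := by
    refine natDegree_le_iff_coeff_eq_zero.mpr fun k hk => ?_
    rw [kummerElim, coeff_sub, coeff_C_mul, coeff_C_mul]
    rcases eq_or_lt_of_le (Nat.succ_le_of_lt hk) with rfl | hk
    · rw [leadingCoeff, hT]; ring
    · rw [coeff_eq_zero_of_natDegree_lt (p := T) (by omega),
        coeff_eq_zero_of_natDegree_lt ((natDegree_kummerDeriv_le T).trans_lt (by omega))]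
      ring
  have hcoeff : (kummerElim T).coeff m ≠ 0 := by
    have hT2 : T.coeff (m + 1 + 1) = 0 := coeff_eq_zero_of_natDegree_lt (by omega)
    convert two_X_mul_wronskian_sub_ne_zero hlead (T.coeff m) m.succ_ne_zero using 1
    rw [kummerElim, coeff_sub, coeff_C_mul, coeff_C_mul, coeff_kummerDeriv, leadingCoeff, hT,
      coeff_kummerDeriv, hT2, wronskian]
    push_cast
    ring
  exact ⟨fun h => hcoeff (by rw [h, coeff_zero]), natDegree_eq_of_le_of_coeff_ne_zero hle hcoeff⟩

lemma natDegree_iterate_kummerElim {P : K[X][Y]} (hP : P ≠ 0) {j : ℕ} (hj : j ≤ P.natDegree) :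
    kummerElim^[j] P ≠ 0 ∧ (kummerElim^[j] P).natDegree = P.natDegree - j := by
  induction j with
  | zero => exact ⟨hP, rfl⟩
  | succ j ih =>
    rw [Function.iterate_succ_apply']
    exact natDegree_kummerElim ((ih (by omega)).2.trans (by omega))

/-- Elimination produces elements of every degree `≤ deg P` in the span of the rows, so a vector in
the kernel of the matrix vanishes. -/
theorem det_kummerMatrix_ne_zero {P : K[X][Y]} (hP : P ≠ 0) : (kummerMatrix P).det ≠ 0 := by
  intro hdet
  obtain ⟨v, hv0, hv⟩ := Matrix.exists_mulVec_eq_zero_iff.mpr hdet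
  have hker (T : K[X][Y]) (hT : T ∈ kummerSpan P P.natDegree) :
      ∑ k : Fin (P.natDegree + 1), T.coeff k * v k = 0 := by
    induction hT using Submodule.span_induction with
    | mem T hT =>
      obtain ⟨s, hs, rfl⟩ := hT
      exact congrFun hv ⟨s, Nat.lt_succ_of_le hs⟩
    | zero => simp
    | add T₁ T₂ _ _ h₁ h₂ => simp [add_mul, Finset.sum_add_distrib, h₁, h₂]
    | smul p T _ h => simp [mul_assoc, ← Finset.mul_sum, h]
  refine hv0 (funext fun k => ?_)
  induction k using WellFoundedLT.induction with
  | _ k ih =>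
  have hj : P.natDegree - k ≤ P.natDegree := Nat.sub_le _ _
  obtain ⟨hT0, hTdeg⟩ := natDegree_iterate_kummerElim hP hj
  have hT := hker _ (kummerSpan_mono P hj (iterate_kummerElim_mem_kummerSpan P _))
  rw [Nat.sub_sub_self k.is_le] at hTdeg
  rw [Finset.sum_eq_single_of_mem k (Finset.mem_univ k)] at hT
  · have hlead := leadingCoeff_ne_zero.mpr hT0
    rw [leadingCoeff, hTdeg] at hlead
    exact (mul_eq_zero.mp hT).resolve_left hlead
  · intro l _ hl
    rcases hl.lt_or_gt with hl | hl
    · rw [ih l hl, Pi.zero_apply, mul_zero]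
    · rw [coeff_eq_zero_of_natDegree_lt (hTdeg.trans_lt hl), zero_mul]

end KummerDeterminant

section ZeroEstimate

variable {K : Type*} [Field K]

variable (K) in
/-- The substitution `P ↦ P(z, f(z))` of `f = kummerSeries K` into bivariate polynomials. -/
noncomputable def kummerSubst : K[X][Y] →+* K⟦X⟧ :=
  eval₂RingHom coeToPowerSeries.ringHom (kummerSeries K)

lemma kummerSubst_C (p : K[X]) : kummerSubst K (C p) = p := by
  simp [kummerSubst]

lemma kummerSubst_Y : kummerSubst K Y = kummerSeries K := by
  simp [kummerSubst]

lemma isCoprime_X_pow_X_sub_C_pow {x : K} (hx : x ≠ 0) (a b : ℕ) :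
    IsCoprime ((X : K[X]) ^ a) ((X - C x) ^ b) := by
  refine IsCoprime.pow ?_
  have h := isCoprime_X_sub_C_of_isUnit_sub (a := 0) (sub_ne_zero.mpr hx.symm).isUnit
  rwa [C_0, sub_zero] at h

lemma evalEval_iterate_kummerDeriv_mul {R : Type*} [CommRing R] {x y : R} {P : R[X][Y]} {s : ℕ}
    (h : ∀ i ≤ s, evalEval x y ((kummerDeriv R)^[i] P) = 0) (A : R[X][Y]) :
    evalEval x y ((kummerDeriv R)^[s] (A * P)) = 0 := by
  induction s generalizing A P with
  | zero => rw [Function.iterate_zero_apply, evalEval_mul, show evalEval x y P = 0 from h 0 le_rfl,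
      mul_zero]
  | succ s ih =>
    have hP : evalEval x y ((kummerDeriv R)^[s] (kummerDeriv R A * P)) = 0 :=
      ih (fun i hi => h i (hi.trans s.le_succ)) _
    have hDP : evalEval x y ((kummerDeriv R)^[s] (A * kummerDeriv R P)) = 0 :=
      ih (fun i hi => h (i + 1) (Nat.succ_le_succ hi)) _
    rw [Function.iterate_succ_apply, Derivation.leibniz, smul_eq_mul, smul_eq_mul,
      mul_comm P, iterate_map_add, evalEval_add, hP, hDP, add_zero]

variable [CharZero K]

lemma kummerSubst_kummerDeriv (P : K[X][Y]) :
    kummerSubst K (kummerDeriv K P) = eulerDeriv K (kummerSubst K P) := by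
  have h2 : ((2 : K[X]) : K⟦X⟧) = 2 := map_ofNat coeToPowerSeries.ringHom 2
  have hC (p : K[X]) :
      kummerSubst K (kummerDeriv K (C p)) = eulerDeriv K (kummerSubst K (C p)) := by
    rw [kummerDeriv_C, kummerSubst_C, kummerSubst_C, eulerDeriv_coe, coe_mul, coe_mul, coe_X, h2]
  have hY : kummerSubst K (kummerDeriv K Y) = eulerDeriv K (kummerSubst K Y) := by
    rw [kummerDeriv_Y, kummerSubst_Y, eulerDeriv_kummerSeries, map_add, map_mul, kummerSubst_C,
      kummerSubst_Y, map_one, coe_sub, coe_mul, coe_X, coe_one, h2]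
  have hmul {A B : K[X][Y]} (hA : kummerSubst K (kummerDeriv K A) = eulerDeriv K (kummerSubst K A))
      (hB : kummerSubst K (kummerDeriv K B) = eulerDeriv K (kummerSubst K B)) :
      kummerSubst K (kummerDeriv K (A * B)) = eulerDeriv K (kummerSubst K (A * B)) := by
    rw [map_mul (kummerSubst K) A B, Derivation.leibniz, Derivation.leibniz, map_add, smul_eq_mul,
      smul_eq_mul, smul_eq_mul, smul_eq_mul, map_mul, map_mul, hA, hB]
  induction P using Polynomial.induction_on with
  | C p => exact hC p
  | add P Q hP hQ => simp only [map_add, hP, hQ]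
  | monomial n p h =>
    rw [pow_succ, ← mul_assoc]
    exact hmul h hY

lemma kummerSubst_iterate_kummerDeriv (P : K[X][Y]) (s : ℕ) :
    kummerSubst K ((kummerDeriv K)^[s] P) = (eulerDeriv K)^[s] (kummerSubst K P) :=
  (Function.Semiconj.iterate_right (f := kummerSubst K) kummerSubst_kummerDeriv s) P

lemma X_pow_dvd_det_kummerMatrix {P : K[X][Y]} {E : ℕ} (h : PowerSeries.X ^ E ∣ kummerSubst K P) :
    X ^ E ∣ (kummerMatrix P).det := by
  have hrow (s : ℕ) : PowerSeries.X ^ E ∣ kummerSubst K ((kummerDeriv K)^[s] P) := by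
    rw [kummerSubst_iterate_kummerDeriv]
    induction s with
    | zero => exact h
    | succ s ih => rw [Function.iterate_succ_apply']; exact X_pow_dvd_eulerDeriv ih
  have hdet : PowerSeries.X ^ E ∣ ((kummerMatrix P).det : K⟦X⟧) := by
    rw [← kummerSubst_C, C_det_kummerMatrix, map_sum]
    refine Finset.dvd_sum fun i _ => ?_
    rw [map_mul]
    exact (hrow i).mul_left _
  simpa [PowerSeries.X_pow_dvd_iff, X_pow_dvd_iff] using hdet

lemma X_sub_C_pow_dvd_of_evalEval_kummerDeriv_C {x y : K} (hx : x ≠ 0) {p : K[X]} {t : ℕ}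
    (h : ∀ s < t, evalEval x y ((kummerDeriv K)^[s] (C p)) = 0) : (X - C x) ^ t ∣ p := by
  induction t generalizing p with
  | zero => simp
  | succ t ih =>
    rcases eq_or_ne p 0 with rfl | hp
    · exact dvd_zero _
    have hroot : p.IsRoot x := (evalEval_C x y p).symm.trans (h 0 t.succ_pos)
    have hdvd : (X - C x) ^ t ∣ 2 * X * derivative p := ih fun s hs => by
      rw [← kummerDeriv_C, ← Function.iterate_succ_apply]
      exact h (s + 1) (Nat.succ_lt_succ hs)
    have hp' : derivative p ≠ 0 := fun h0 => by
      rw [eq_C_of_natDegree_eq_zero (derivative_eq_zero.mp h0)] at hroot hp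
      exact hp (by rw [eval_C.symm.trans hroot, C_0])
    have h2 : IsUnit (2 : K[X]) := (isUnit_C (R := K)).mpr (IsUnit.mk0 2 two_ne_zero)
    have hmult : t ≤ (derivative p).rootMultiplicity x := by
      refine (le_rootMultiplicity_iff hp').mpr ?_
      rw [mul_assoc, h2.dvd_mul_left] at hdvd
      have hcop := isCoprime_X_pow_X_sub_C_pow hx 1 t
      rw [pow_one] at hcop
      exact hcop.symm.dvd_of_dvd_mul_left hdvd
    rw [derivative_rootMultiplicity_of_root hroot] at hmult
    refine (le_rootMultiplicity_iff hp).mp ?_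
    have := (rootMultiplicity_pos hp).mpr hroot
    omega

lemma X_sub_C_pow_dvd_det_kummerMatrix {x y : K} (hx : x ≠ 0) {P : K[X][Y]} {t : ℕ}
    (h : ∀ s < t, evalEval x y ((kummerDeriv K)^[s] P) = 0) :
    (X - C x) ^ (t - P.natDegree) ∣ (kummerMatrix P).det := by
  refine X_sub_C_pow_dvd_of_evalEval_kummerDeriv_C (y := y) hx fun s hs => ?_
  rw [C_det_kummerMatrix, ← Derivation.coeFn_coe, ← Module.End.coe_pow, map_sum,
    evalEval_finsetSum]
  refine Finset.sum_eq_zero fun i _ => ?_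
  rw [Module.End.coe_pow, Derivation.coeFn_coe]
  refine evalEval_iterate_kummerDeriv_mul (fun j hj => ?_) _
  rw [← Function.iterate_add_apply]
  have := i.is_le
  exact h _ (by omega)

/-- The determinant of `kummerMatrix P` vanishes to high order at `0` and at `x`, so its degree is
large. -/
theorem zero_estimate {x y : K} (hx : x ≠ 0) {P : K[X][Y]} (hP : P ≠ 0) {d n E t : ℕ}
    (hd : P.natDegree ≤ d) (hn : ∀ k, (P.coeff k).natDegree ≤ n)
    (hE : PowerSeries.X ^ E ∣ kummerSubst K P)
    (ht : ∀ s < t, evalEval x y ((kummerDeriv K)^[s] P) = 0) :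
    E + t ≤ (d + 1) * (n + d) + d := by
  have hdvd := (isCoprime_X_pow_X_sub_C_pow hx _ _).mul_dvd (X_pow_dvd_det_kummerMatrix hE)
    (X_sub_C_pow_dvd_det_kummerMatrix hx ht)
  have hle := natDegree_le_of_dvd hdvd (det_kummerMatrix_ne_zero hP)
  rw [natDegree_mul (by simp) (pow_ne_zero _ (X_sub_C_ne_zero x)), natDegree_X_pow, natDegree_pow,
    natDegree_X_sub_C] at hle
  have hdet := natDegree_det_kummerMatrix_le hn
  have : (P.natDegree + 1) * (n + P.natDegree) ≤ (d + 1) * (n + d) := by gcongr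
  omega

lemma exists_evalEval_iterate_kummerDeriv_ne_zero {x : K}
    (hx : x ≠ 0) (y : K) {P : K[X][Y]} (hP : P ≠ 0) {d n E t : ℕ} (hd : P.natDegree ≤ d)
    (hn : ∀ k, (P.coeff k).natDegree ≤ n) (hE : PowerSeries.X ^ E ∣ kummerSubst K P)
    (ht : (d + 1) * (n + d) + d ≤ E + t) :
    ∃ s ≤ t, evalEval x y ((kummerDeriv K)^[s] P) ≠ 0 := by
  by_contra! hvanish
  have := zero_estimate hx hP hd hn hE fun s (hs : s < t + 1) => hvanish s (Nat.le_of_lt_succ hs)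
  omega

end ZeroEstimate

section ExponentialCoefficients

variable {R : Type*} [CommRing R]

lemma factorial_mul_coeff_mul (F G : R⟦X⟧) (i : ℕ) :
    (i ! : R) * PowerSeries.coeff i (F * G) =
      ∑ x ∈ Finset.HasAntidiagonal.antidiagonal i, (i.choose x.1 : R) *
        ((x.1 ! * PowerSeries.coeff x.1 F) * (x.2 ! * PowerSeries.coeff x.2 G)) := by
  rw [PowerSeries.coeff_mul, Finset.mul_sum]
  refine Finset.sum_congr rfl fun x hx => ?_
  rw [← Finset.HasAntidiagonal.mem_antidiagonal.mp hx, ← Nat.add_choose_mul_factorial_mul_factorial,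
    ← Nat.choose_symm_add]
  push_cast
  ring

lemma factorial_mul_coeff_one (i : ℕ) :
    (i ! : R) * PowerSeries.coeff i (1 : R⟦X⟧) = 0 ^ i := by
  cases i <;> simp [PowerSeries.coeff_one]

lemma pow_mul_factorial_mul_coeff_pow_mem {S : Subring R} {F : R⟦X⟧} {D : R} {N : ℕ}
    (hF : ∀ i ≤ N, D * (i ! * PowerSeries.coeff i F) ∈ S) (k : ℕ) :
    ∀ i ≤ N, D ^ k * (i ! * PowerSeries.coeff i (F ^ k)) ∈ S := by
  induction k with
  | zero =>
    intro i _
    rw [pow_zero, pow_zero, one_mul, factorial_mul_coeff_one]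
    exact pow_mem (zero_mem S) i
  | succ k ih =>
    intro i hi
    rw [pow_succ F, factorial_mul_coeff_mul, Finset.mul_sum]
    refine sum_mem fun x hx => ?_
    have hx := Finset.HasAntidiagonal.mem_antidiagonal.mp hx
    convert mul_mem (natCast_mem S (i.choose x.1))
      (mul_mem (ih x.1 (by omega)) (hF x.2 (by omega))) using 1
    ring

lemma abs_factorial_mul_coeff_pow_le {F : ℝ⟦X⟧} (hF : ∀ i, |i ! * PowerSeries.coeff i F| ≤ 1)
    (k i : ℕ) : |i ! * PowerSeries.coeff i (F ^ k)| ≤ (k : ℝ) ^ i := by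
  induction k generalizing i with
  | zero =>
    rw [pow_zero, factorial_mul_coeff_one, Nat.cast_zero, abs_of_nonneg (by positivity)]
  | succ k ih =>
    rw [pow_succ, factorial_mul_coeff_mul]
    calc |∑ x ∈ Finset.HasAntidiagonal.antidiagonal i, (i.choose x.1 : ℝ) *
          ((x.1 ! * PowerSeries.coeff x.1 (F ^ k)) * (x.2 ! * PowerSeries.coeff x.2 F))|
        ≤ ∑ x ∈ Finset.HasAntidiagonal.antidiagonal i,
            (i.choose x.1 : ℝ) * ((k : ℝ) ^ x.1 * 1 ^ x.2) := by
          refine (Finset.abs_sum_le_sum_abs _ _).trans (Finset.sum_le_sum fun x _ => ?_)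
          rw [abs_mul, Nat.abs_cast, abs_mul, one_pow]
          gcongr
          exacts [ih x.1, hF x.2]
      _ = ((k + 1 : ℕ) : ℝ) ^ i := by
          rw [Nat.cast_succ, (Commute.all (k : ℝ) 1).add_pow']
          simp only [nsmul_eq_mul]

end ExponentialCoefficients

section KummerCoefficients

lemma factorial_mul_coeff_kummerSeries (i : ℕ) :
    (i ! : ℝ) * PowerSeries.coeff i (kummerSeries ℝ) =
      4 ^ i / ((2 * i + 1 : ℕ) * i.centralBinom : ℝ) := by
  have hc : (i.centralBinom : ℝ) ≠ 0 := by exact_mod_cast i.centralBinom_ne_zero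
  have h := Nat.add_choose_mul_factorial_mul_factorial i i
  rw [← two_mul, ← Nat.centralBinom_eq_two_mul_choose] at h
  rw [kummerSeries, PowerSeries.coeff_mk, Nat.factorial_succ, ← h]
  push_cast
  field_simp

lemma factorial_mul_coeff_kummerSeries_le_one (i : ℕ) :
    |i ! * PowerSeries.coeff i (kummerSeries ℝ)| ≤ 1 := by
  have h : 4 ^ i ≤ (2 * i + 1) * i.centralBinom := by
    rw [Nat.centralBinom_eq_two_mul_choose]
    simpa using Nat.four_pow_le_two_mul_add_one_mul_central_binom i
  have h0 : 0 < (2 * i + 1) * i.centralBinom := Nat.mul_pos (by omega) i.centralBinom_pos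
  rw [factorial_mul_coeff_kummerSeries, abs_of_nonneg (by positivity), ← Nat.cast_mul,
    div_le_one (by exact_mod_cast h0)]
  exact_mod_cast h

lemma lcmUpto_sq_mul_factorial_mul_coeff_kummerSeries_mem {N i : ℕ} (hi : i ≤ N) :
    (((2 * N + 1).lcmUpto ^ 2 : ℕ) : ℝ) * (i ! * PowerSeries.coeff i (kummerSeries ℝ)) ∈
      (Int.castRingHom ℝ).range := by
  have hodd : 2 * i + 1 ∣ (2 * N + 1).lcmUpto :=
    Finset.dvd_lcm (f := id) (Finset.mem_Icc.mpr ⟨by omega, by omega⟩)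
  have hbinom : i.centralBinom ∣ (2 * N + 1).lcmUpto := by
    rw [Nat.centralBinom_eq_two_mul_choose]
    refine (Chebyshev.choose_dvd_lcmUpto (by omega)).trans ?_
    exact Finset.lcm_mono (Finset.Icc_subset_Icc_right (by omega))
  obtain ⟨z, hz⟩ := mul_dvd_mul hodd hbinom
  have h1 : ((2 * i + 1 : ℕ) : ℝ) ≠ 0 := by positivity
  have h2 : (i.centralBinom : ℝ) ≠ 0 := by exact_mod_cast i.centralBinom_ne_zero
  refine ⟨(z * 4 ^ i : ℕ), ?_⟩
  rw [factorial_mul_coeff_kummerSeries, sq, hz, eq_intCast, Int.cast_natCast]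
  push_cast at h1 ⊢
  field_simp

lemma lcmUpto_sq_le (N : ℕ) :
    (((2 * N + 1).lcmUpto ^ 2 : ℕ) : ℝ) ≤ exp (4 * (log 4 + 4)) ^ (N + 1) := by
  have hpos : (0 : ℝ) < (2 * N + 1).lcmUpto := by exact_mod_cast Nat.lcmUpto_pos _
  have hψ := Chebyshev.psi_le_const_mul_self (x := ((2 * N + 1 : ℕ) : ℝ)) (by positivity)
  rw [Chebyshev.psi_eq_log_lcmUpto, log_le_iff_le_exp hpos] at hψ
  have hlog : 0 ≤ log 4 := log_nonneg (by norm_num)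
  rw [Nat.cast_pow]
  calc ((2 * N + 1).lcmUpto : ℝ) ^ 2 ≤ exp ((log 4 + 4) * (2 * N + 1 : ℕ)) ^ 2 := by gcongr
    _ = exp (2 * ((log 4 + 4) * (2 * N + 1 : ℕ))) := by rw [← exp_nat_mul]; norm_num
    _ ≤ exp ((N + 1 : ℕ) * (4 * (log 4 + 4))) := by
        refine exp_le_exp.mpr ?_
        push_cast
        nlinarith
    _ = exp (4 * (log 4 + 4)) ^ (N + 1) := exp_nat_mul _ _

end KummerCoefficients

section AuxiliaryPolynomial

open scoped Matrix.Norms.Elementwise in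
lemma exists_int_vec_abs_le_pow {ι κ : Type*} [Fintype ι] [Fintype κ] (A : Matrix ι κ ℤ) {e u : ℕ}
    (he : 0 < e) (hu : 0 < u) (hι : Fintype.card ι = e * u) (hκ : Fintype.card κ = (e + 1) * u)
    {M : ℝ} (hM : 1 ≤ M) (hA : ∀ i j, |(A i j : ℝ)| ≤ M) :
    ∃ t : κ → ℤ, t ≠ 0 ∧ A.mulVec t = 0 ∧ ∀ j, |(t j : ℝ)| ≤ ((e + 1) * u * M) ^ e := by
  obtain ⟨t, ht0, hAt, ht⟩ := Int.Matrix.exists_ne_zero_int_vec_norm_le A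
    (by rw [hι, hκ]; nlinarith) (by rw [hι]; positivity)
  have hexp : ((e * u : ℕ) : ℝ) / (((e + 1) * u : ℕ) - (e * u : ℕ)) = e := by
    push_cast
    field_simp
    ring
  have hAM : ‖A‖ ≤ M := (Matrix.norm_le_iff (by positivity)).mpr fun i j => by
    rw [Int.norm_eq_abs]
    exact hA i j
  rw [hι, hκ, hexp, rpow_natCast] at ht
  refine ⟨t, ht0, hAt, fun j => ?_⟩
  rw [← Int.norm_eq_abs]
  calc ‖t j‖ ≤ ‖t‖ := norm_le_pi_norm t j
    _ ≤ ((((e + 1) * u : ℕ) : ℝ) * max 1 ‖A‖) ^ e := ht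
    _ ≤ ((e + 1) * u * M) ^ e := by
        push_cast
        gcongr
        exact max_le hM hAM

/-- The coefficient of `z ^ i` in `z ^ j / j! * kummerSeries ^ k`, multiplied by `i!`. -/
noncomputable def auxCoeff (i j k : ℕ) : ℝ :=
  i.choose j * ((i - j)! * PowerSeries.coeff (i - j) (kummerSeries ℝ ^ k))

lemma abs_auxCoeff_le {i j k d E : ℕ} (hi : i ≤ E) (hk : k ≤ d) :
    |auxCoeff i j k| ≤ (2 * (d + 1)) ^ E := by
  have h := abs_factorial_mul_coeff_pow_le factorial_mul_coeff_kummerSeries_le_one k (i - j)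
  have hkd : (k : ℝ) ≤ d + 1 := by exact_mod_cast hk.trans d.le_succ
  have hchoose : (i.choose j : ℝ) ≤ 2 ^ i := by exact_mod_cast Nat.choose_le_two_pow i j
  rw [auxCoeff, abs_mul, Nat.abs_cast, mul_pow]
  calc (i.choose j : ℝ) * |(i - j)! * PowerSeries.coeff (i - j) (kummerSeries ℝ ^ k)|
      ≤ 2 ^ i * (k : ℝ) ^ (i - j) := by gcongr
    _ ≤ 2 ^ i * (d + 1 : ℝ) ^ (i - j) := by gcongr
    _ ≤ 2 ^ E * (d + 1 : ℝ) ^ E := by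
        have : (1 : ℝ) ≤ d + 1 := le_add_of_nonneg_left d.cast_nonneg
        gcongr
        · norm_num
        · omega

lemma lcmUpto_pow_mul_auxCoeff_mem {i k d E : ℕ} (hi : i ≤ E) (hk : k ≤ d) (j : ℕ) :
    (((2 * E + 1).lcmUpto ^ 2 : ℕ) : ℝ) ^ d * auxCoeff i j k ∈ (Int.castRingHom ℝ).range := by
  have h := pow_mul_factorial_mul_coeff_pow_mem
    (fun i => lcmUpto_sq_mul_factorial_mul_coeff_kummerSeries_mem (N := E) (i := i)) k (i - j)
    (by omega)
  convert mul_mem (pow_mem (natCast_mem _ ((2 * E + 1).lcmUpto ^ 2)) (d - k))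
    (mul_mem (natCast_mem _ (i.choose j)) h) using 1
  rw [auxCoeff, ← Nat.sub_add_cancel hk, pow_add, Nat.add_sub_cancel]
  ring

lemma exists_int_eq_mul_auxCoeff (d e : ℕ) : ∃ M : ℝ, 1 ≤ M ∧ ∀ u : ℕ, 0 < u → ∃ D : ℝ, 0 < D ∧
    ∀ i ≤ e * u, ∀ k ≤ d, ∀ j, ∃ z : ℤ, (z : ℝ) = D * auxCoeff i j k ∧ |(z : ℝ)| ≤ M ^ u := by
  set L : ℝ := exp (4 * (log 4 + 4))
  have hL : 1 ≤ L := one_le_exp (by positivity)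
  have hd : (1 : ℝ) ≤ 2 * (d + 1) := by linarith [d.cast_nonneg (α := ℝ)]
  refine ⟨(L ^ (e + 1)) ^ d * (2 * (d + 1)) ^ e,
    one_le_mul_of_one_le_of_one_le (one_le_pow₀ (one_le_pow₀ hL)) (one_le_pow₀ hd),
    fun u hu => ⟨(((2 * (e * u) + 1).lcmUpto ^ 2 : ℕ) : ℝ) ^ d, ?_, fun i hi k hk j => ?_⟩⟩
  · exact_mod_cast pow_pos (pow_pos (Nat.lcmUpto_pos _) 2) d
  obtain ⟨z, hz⟩ := lcmUpto_pow_mul_auxCoeff_mem hi hk j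
  rw [eq_intCast] at hz
  refine ⟨z, hz, ?_⟩
  have hlcm : (((2 * (e * u) + 1).lcmUpto ^ 2 : ℕ) : ℝ) ≤ L ^ ((e + 1) * u) :=
    (lcmUpto_sq_le _).trans (pow_le_pow_right₀ hL (by nlinarith))
  rw [hz, abs_mul, abs_of_nonneg (by positivity)]
  calc (((2 * (e * u) + 1).lcmUpto ^ 2 : ℕ) : ℝ) ^ d * |auxCoeff i j k|
      ≤ (L ^ ((e + 1) * u)) ^ d * (2 * (d + 1)) ^ (e * u) := by
        gcongr
        exact abs_auxCoeff_le hi hk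
    _ = ((L ^ (e + 1)) ^ d * (2 * (d + 1)) ^ e) ^ u := by ring

lemma exists_int_vec_sum_auxCoeff_eq_zero (d : ℕ) : ∃ B : ℝ, 1 ≤ B ∧ ∀ u : ℕ, 0 < u →
    ∃ t : Fin (d + 1) × Fin ((d + 2) * u) → ℤ, t ≠ 0 ∧ (∀ b, |(t b : ℝ)| ≤ B ^ u) ∧
      ∀ i < (d ^ 2 + 3 * d + 1) * u, ∑ b, t b * auxCoeff i b.2 b.1 = 0 := by
  set e := d ^ 2 + 3 * d + 1 with he
  obtain ⟨M, hM, hMu⟩ := exists_int_eq_mul_auxCoeff d e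
  refine ⟨((e + 1) * 2 * M) ^ e, one_le_pow₀ (by nlinarith [e.cast_nonneg (α := ℝ)]),
    fun u hu => ?_⟩
  obtain ⟨D, hD, hz⟩ := hMu u hu
  choose A hA hAM using fun (i : Fin (e * u)) (b : Fin (d + 1) × Fin ((d + 2) * u)) =>
    hz i i.2.le b.1 b.1.is_le b.2
  obtain ⟨t, ht0, hAt, ht⟩ := exists_int_vec_abs_le_pow (e := e) (u := u) (Matrix.of A)
    (Nat.succ_pos _) hu (by simp) (by simp only [Fintype.card_prod, Fintype.card_fin, he]; ring)
    (one_le_pow₀ hM) hAM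
  refine ⟨t, ht0, fun b => (ht b).trans ?_, fun i hi => ?_⟩
  · have h2u : (u : ℝ) ≤ 2 ^ u := by exact_mod_cast Nat.lt_two_pow_self.le
    have heu : (e : ℝ) + 1 ≤ (e + 1) ^ u := le_self_pow₀ (by simp) hu.ne'
    calc ((e + 1) * u * M ^ u) ^ e ≤ ((e + 1 : ℝ) ^ u * 2 ^ u * M ^ u) ^ e := by gcongr
      _ = (((e + 1) * 2 * M) ^ e) ^ u := by
        rw [← mul_pow, ← mul_pow, ← pow_mul, ← pow_mul, mul_comm u]
  · have h := congrArg (Int.cast : ℤ → ℝ) (congrFun hAt ⟨i, hi⟩)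
    simp only [Matrix.mulVec, dotProduct, Matrix.of_apply, Pi.zero_apply, Int.cast_sum,
      Int.cast_mul, hA, Int.cast_zero, mul_assoc, ← Finset.mul_sum] at h
    simpa only [mul_comm] using (mul_eq_zero.mp h).resolve_left hD.ne'

lemma factorial_mul_coeff_monomial_mul_pow (i j k : ℕ) (c : ℝ) :
    i ! * PowerSeries.coeff i (((monomial j c : ℝ[X]) : ℝ⟦X⟧) * kummerSeries ℝ ^ k) =
      j ! * c * auxCoeff i j k := by
  rw [auxCoeff, coe_monomial, PowerSeries.monomial_eq_C_mul_X_pow, mul_assoc,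
    PowerSeries.coeff_C_mul, PowerSeries.coeff_X_pow_mul']
  rcases le_or_gt j i with h | h
  · rw [if_pos h, ← Nat.choose_mul_factorial_mul_factorial h]
    push_cast
    ring
  · rw [if_neg h.not_ge, Nat.choose_eq_zero_of_lt h]
    simp

/-- The polynomial `∑ n! / j! * t (k, j) * X ^ j * Y ^ k`; its coefficients are integers because
`j < n`. -/
noncomputable def auxPoly {d n : ℕ} (t : Fin (d + 1) × Fin n → ℤ) : ℤ[X][Y] :=
  ∑ b, monomial b.1 (monomial b.2 (n.descFactorial (n - b.2) * t b))

lemma coeff_coeff_auxPoly {d n : ℕ} (t : Fin (d + 1) × Fin n → ℤ) (k j : ℕ) :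
    ((auxPoly t).coeff k).coeff j = if h : k < d + 1 ∧ j < n then
      n.descFactorial (n - j) * t (⟨k, h.1⟩, ⟨j, h.2⟩) else 0 := by
  simp only [auxPoly, finsetSum_coeff, coeff_monomial, apply_ite (fun p : ℤ[X] => p.coeff j),
    coeff_zero, ← ite_and]
  split_ifs with h
  · rw [Finset.sum_eq_single_of_mem (⟨k, h.1⟩, ⟨j, h.2⟩) (Finset.mem_univ _), if_pos ⟨rfl, rfl⟩]
    exact fun b _ hb => if_neg fun hkj => hb (by ext <;> simp [hkj])
  · refine Finset.sum_eq_zero fun b _ => if_neg fun hkj => h ?_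
    exact ⟨hkj.1 ▸ b.1.2, hkj.2 ▸ b.2.2⟩

lemma auxPoly_ne_zero {d n : ℕ} {t : Fin (d + 1) × Fin n → ℤ} (ht : t ≠ 0) : auxPoly t ≠ 0 := by
  obtain ⟨b, hb⟩ := Function.ne_iff.mp ht
  intro h
  have := coeff_coeff_auxPoly t b.1 b.2
  rw [h, coeff_zero, coeff_zero, dif_pos ⟨b.1.2, b.2.2⟩] at this
  refine mul_ne_zero ?_ hb this.symm
  exact_mod_cast (Nat.descFactorial_pos.mpr (Nat.sub_le _ _)).ne'

lemma natDegree_auxPoly_le {d n : ℕ} (t : Fin (d + 1) × Fin n → ℤ) :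
    (auxPoly t).natDegree ≤ d :=
  natDegree_sum_le_of_forall_le _ _ fun b _ => (natDegree_monomial_le _).trans b.1.is_le

lemma natDegree_coeff_auxPoly_le {d n : ℕ} (t : Fin (d + 1) × Fin n → ℤ) (k : ℕ) :
    ((auxPoly t).coeff k).natDegree ≤ n :=
  natDegree_le_iff_coeff_eq_zero.mpr fun j hj => by
    rw [coeff_coeff_auxPoly, dif_neg (fun h => hj.not_gt h.2)]

lemma descFactorial_sub_mul_factorial {n j : ℕ} (h : j ≤ n) :
    n.descFactorial (n - j) * j ! = n ! := by
  rw [mul_comm, ← Nat.factorial_mul_descFactorial (Nat.sub_le n j), Nat.sub_sub_self h]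

lemma abs_coeff_coeff_auxPoly_le {d n : ℕ} {t : Fin (d + 1) × Fin n → ℤ} {M : ℝ} (hM : 0 ≤ M)
    (ht : ∀ b, |(t b : ℝ)| ≤ M) (k j : ℕ) : |(((auxPoly t).coeff k).coeff j : ℝ)| ≤ n ! * M := by
  rw [coeff_coeff_auxPoly]
  split_ifs with h
  · have hfac : n.descFactorial (n - j) ≤ n ! := by
      rw [← descFactorial_sub_mul_factorial h.2.le]
      exact Nat.le_mul_of_pos_right _ j.factorial_pos
    push_cast
    rw [abs_mul, Nat.abs_cast]
    gcongr
    exact ht _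
  · rw [Int.cast_zero, abs_zero]
    positivity

lemma factorial_mul_coeff_kummerSubst_auxPoly {d n : ℕ} (t : Fin (d + 1) × Fin n → ℤ) (i : ℕ) :
    i ! * PowerSeries.coeff i
      (kummerSubst ℝ ((auxPoly t).map (mapRingHom (Int.castRingHom ℝ)))) =
      n ! * ∑ b, t b * auxCoeff i b.2 b.1 := by
  simp only [auxPoly, Polynomial.map_sum, map_sum, Finset.mul_sum]
  refine Finset.sum_congr rfl fun b _ => ?_
  rw [map_monomial, ← C_mul_X_pow_eq_monomial, map_mul (kummerSubst ℝ), map_pow, kummerSubst_C,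
    kummerSubst_Y, coe_mapRingHom, map_monomial, factorial_mul_coeff_monomial_mul_pow, eq_intCast,
    ← descFactorial_sub_mul_factorial b.2.2.le]
  push_cast
  ring

lemma factorial_mul_abs_coeff_kummerSubst_auxPoly_le {d n : ℕ} {t : Fin (d + 1) × Fin n → ℤ}
    {M : ℝ} (ht : ∀ b, |(t b : ℝ)| ≤ M) (i : ℕ) :
    i ! * |PowerSeries.coeff i
      (kummerSubst ℝ ((auxPoly t).map (mapRingHom (Int.castRingHom ℝ))))| ≤
      n ! * ((d + 1) * n * M) * (2 * (d + 1)) ^ i := by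
  rw [← Nat.abs_cast i !, ← abs_mul, factorial_mul_coeff_kummerSubst_auxPoly, abs_mul,
    Nat.abs_cast, mul_assoc]
  gcongr
  calc |∑ b, t b * auxCoeff i b.2 b.1|
      ≤ ∑ _ : Fin (d + 1) × Fin n, M * (2 * (d + 1)) ^ i := by
        refine (Finset.abs_sum_le_sum_abs _ _).trans (Finset.sum_le_sum fun b _ => ?_)
        rw [abs_mul]
        exact mul_le_mul (ht b) (abs_auxCoeff_le le_rfl b.1.is_le) (abs_nonneg _)
          ((abs_nonneg _).trans (ht b))
    _ = (d + 1) * n * M * (2 * (d + 1)) ^ i := by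
        simp only [Finset.sum_const, Finset.card_univ, Fintype.card_prod, Fintype.card_fin,
          nsmul_eq_mul]
        push_cast
        ring

theorem exists_auxPoly (d : ℕ) : ∃ B : ℝ, ∀ u : ℕ, 0 < u → ∃ P : ℤ[X][Y],
    P ≠ 0 ∧ P.natDegree ≤ d ∧ (∀ k, (P.coeff k).natDegree ≤ (d + 2) * u) ∧
    (∀ k j, |((P.coeff k).coeff j : ℝ)| ≤ ((d + 2) * u)! * B ^ u) ∧
    PowerSeries.X ^ ((d ^ 2 + 3 * d + 1) * u) ∣
      kummerSubst ℝ (P.map (mapRingHom (Int.castRingHom ℝ))) ∧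
    ∀ i, i ! * |PowerSeries.coeff i (kummerSubst ℝ (P.map (mapRingHom (Int.castRingHom ℝ))))| ≤
      ((d + 2) * u)! * B ^ u * (2 * (d + 1)) ^ i := by
  obtain ⟨B, hB, h⟩ := exists_int_vec_sum_auxCoeff_eq_zero d
  have hd : (1 : ℝ) ≤ (d + 1) * (d + 2) := by nlinarith [d.cast_nonneg (α := ℝ)]
  refine ⟨(d + 1) * (d + 2) * 2 * B, fun u hu => ?_⟩
  obtain ⟨t, ht0, ht, hsum⟩ := h u hu
  have hBu : (d + 1) * ((d + 2) * u : ℕ) * B ^ u ≤ ((d + 1) * (d + 2) * 2 * B) ^ u := by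
    have h2u : (u : ℝ) ≤ 2 ^ u := by exact_mod_cast Nat.lt_two_pow_self.le
    have hdu : ((d + 1) * (d + 2) : ℝ) ≤ ((d + 1) * (d + 2)) ^ u := le_self_pow₀ hd hu.ne'
    push_cast
    rw [mul_pow _ B, mul_pow _ (2 : ℝ), ← mul_assoc]
    gcongr
  have hBB : B ^ u ≤ ((d + 1) * (d + 2) * 2 * B) ^ u := by
    gcongr
    nlinarith
  refine ⟨auxPoly t, auxPoly_ne_zero ht0, natDegree_auxPoly_le t, natDegree_coeff_auxPoly_le t,
    abs_coeff_coeff_auxPoly_le (by positivity) fun b => (ht b).trans hBB,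
    PowerSeries.X_pow_dvd_iff.mpr fun i hi => ?_, fun i => ?_⟩
  · have := factorial_mul_coeff_kummerSubst_auxPoly t i
    rw [hsum i hi, mul_zero] at this
    exact (mul_eq_zero.mp this).resolve_left (by positivity)
  · refine (factorial_mul_abs_coeff_kummerSubst_auxPoly_le ht i).trans ?_
    gcongr

end AuxiliaryPolynomial

section UpperBound

variable {x ξ v w : ℝ} {F G : ℝ⟦X⟧}

lemma hasSum_coeff_mul (hF : HasSum (fun i => PowerSeries.coeff i F * x ^ i) v)
    (hG : HasSum (fun i => PowerSeries.coeff i G * x ^ i) w) :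
    HasSum (fun i => PowerSeries.coeff i (F * G) * x ^ i) (v * w) := by
  have hcoeff (i : ℕ) : PowerSeries.coeff i (F * G) * x ^ i =
      ∑ p ∈ Finset.HasAntidiagonal.antidiagonal i,
        (PowerSeries.coeff p.1 F * x ^ p.1) * (PowerSeries.coeff p.2 G * x ^ p.2) := by
    rw [PowerSeries.coeff_mul, Finset.sum_mul]
    refine Finset.sum_congr rfl fun p hp => ?_
    rw [← Finset.HasAntidiagonal.mem_antidiagonal.mp hp, pow_add]
    ring
  simp only [hcoeff]
  rw [← hF.tsum_eq, ← hG.tsum_eq, tsum_mul_tsum_eq_tsum_sum_antidiagonal_of_summable_norm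
    hF.summable.norm hG.summable.norm]
  exact (summable_norm_sum_mul_antidiagonal_of_summable_norm hF.summable.norm
    hG.summable.norm).of_norm.hasSum

lemma hasSum_coeff_pow (hF : HasSum (fun i => PowerSeries.coeff i F * x ^ i) v) (k : ℕ) :
    HasSum (fun i => PowerSeries.coeff i (F ^ k) * x ^ i) (v ^ k) := by
  induction k with
  | zero =>
    convert hasSum_single (f := fun i => PowerSeries.coeff i (F ^ 0) * x ^ i) 0 fun i hi => ?_
    · simp
    · simp [PowerSeries.coeff_one, hi]
  | succ k ih => simpa only [pow_succ] using hasSum_coeff_mul ih hF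

lemma hasSum_coeff_coe (p : ℝ[X]) (x : ℝ) :
    HasSum (fun i => PowerSeries.coeff i (p : ℝ⟦X⟧) * x ^ i) (p.eval x) := by
  rw [eval_eq_sum_range]
  simp only [coeff_coe]
  refine hasSum_sum_of_ne_finset_zero fun i hi => ?_
  rw [coeff_eq_zero_of_natDegree_lt (by simpa using hi), zero_mul]

lemma hasSum_coeff_kummerSubst
    (hξ : HasSum (fun i => PowerSeries.coeff i (kummerSeries ℝ) * x ^ i) ξ) (P : ℝ[X][Y]) :
    HasSum (fun i => PowerSeries.coeff i (kummerSubst ℝ P) * x ^ i) (evalEval x ξ P) := by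
  induction P using Polynomial.induction_on' with
  | add P Q hP hQ => simpa only [map_add, add_mul, evalEval_add] using hP.add hQ
  | monomial k p =>
    rw [← C_mul_X_pow_eq_monomial, evalEval_mul, evalEval_pow, evalEval_C, evalEval_X, map_mul,
      map_pow, kummerSubst_C, kummerSubst_Y]
    exact hasSum_coeff_mul (hasSum_coeff_coe p x) (hasSum_coeff_pow hξ k)

lemma abs_le_of_X_pow_dvd {E : ℕ} {H y : ℝ} (hy : 0 ≤ y) (hE : PowerSeries.X ^ E ∣ F)
    (hF : HasSum (fun i => PowerSeries.coeff i F * x ^ i) v)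
    (hH : ∀ i, |PowerSeries.coeff i F * x ^ i| ≤ H * (y ^ i / i !)) :
    |v| ≤ H * (y ^ E / E ! * exp y) := by
  have hH0 : 0 ≤ H := by simpa using (abs_nonneg _).trans (hH 0)
  have hshift : HasSum (fun i => PowerSeries.coeff (i + E) F * x ^ (i + E)) v := by
    have hzero : ∀ i ∈ Finset.range E, PowerSeries.coeff i F * x ^ i = 0 := fun i hi => by
      rw [PowerSeries.X_pow_dvd_iff.mp hE i (Finset.mem_range.mp hi), zero_mul]
    simpa only [Finset.sum_eq_zero hzero, sub_zero] using (hasSum_nat_add_iff' E).mpr hF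
  have hexp : HasSum (fun i => H * (y ^ E / E ! * (y ^ i / i !))) (H * (y ^ E / E ! * exp y)) := by
    rw [exp_eq_exp_ℝ]
    exact ((NormedSpace.expSeries_div_hasSum_exp y).mul_left _).mul_left _
  rw [← norm_eq_abs, ← hshift.tsum_eq]
  refine tsum_of_norm_bounded hexp fun i => (hH (i + E)).trans ?_
  have hfac : (i ! * E ! : ℝ) ≤ (i + E)! := by
    exact_mod_cast Nat.le_of_dvd (Nat.factorial_pos _)
      (Nat.factorial_mul_factorial_dvd_factorial_add i E)
  calc H * (y ^ (i + E) / (i + E)!) ≤ H * (y ^ (i + E) / (i ! * E !)) := by gcongr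
    _ = H * (y ^ E / E ! * (y ^ i / i !)) := by rw [pow_add]; field_simp

lemma two_mul_pow_le_factorial_mul_exp (i s : ℕ) : (2 * i : ℝ) ^ s ≤ s ! * exp 2 ^ i := by
  rw [← exp_nat_mul, mul_comm (i : ℝ), ← div_le_iff₀' (by positivity)]
  exact pow_div_factorial_le_exp _ (by positivity) s

lemma abs_evalEval_iterate_kummerDeriv_le {P : ℝ[X][Y]} {E : ℕ} {H A : ℝ} (hA : 0 ≤ A)
    (hξ : HasSum (fun i => PowerSeries.coeff i (kummerSeries ℝ) * x ^ i) ξ)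
    (hE : PowerSeries.X ^ E ∣ kummerSubst ℝ P)
    (hH : ∀ i, i ! * |PowerSeries.coeff i (kummerSubst ℝ P)| ≤ H * A ^ i) (s : ℕ) :
    |evalEval x ξ ((kummerDeriv ℝ)^[s] P)| ≤
      s ! * H * ((A * exp 2 * |x|) ^ E / E ! * exp (A * exp 2 * |x|)) := by
  have : 0 ≤ H := by simpa using (by positivity : (0 : ℝ) ≤ _).trans (hH 0)
  refine abs_le_of_X_pow_dvd (by positivity) ?_ (hasSum_coeff_kummerSubst hξ _) fun i => ?_
  · rw [kummerSubst_iterate_kummerDeriv]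
    refine PowerSeries.X_pow_dvd_iff.mpr fun i hi => ?_
    rw [coeff_iterate_eulerDeriv, PowerSeries.X_pow_dvd_iff.mp hE i hi, mul_zero]
  · rw [kummerSubst_iterate_kummerDeriv, coeff_iterate_eulerDeriv, abs_mul, abs_mul, abs_pow,
      abs_pow, abs_of_nonneg (by positivity : (0 : ℝ) ≤ 2 * i)]
    have hcoeff : |PowerSeries.coeff i (kummerSubst ℝ P)| ≤ H * A ^ i / i ! :=
      (le_div_iff₀' (by positivity)).mpr (hH i)
    calc (2 * i : ℝ) ^ s * |PowerSeries.coeff i (kummerSubst ℝ P)| * |x| ^ i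
        ≤ (s ! * exp 2 ^ i) * (H * A ^ i / i !) * |x| ^ i := by
          gcongr
          exact two_mul_pow_le_factorial_mul_exp i s
      _ = s ! * H * ((A * exp 2 * |x|) ^ i / i !) := by rw [mul_pow, mul_pow]; ring

end UpperBound

section Liouville

lemma one_le_norm_leadingCoeff_pow_mul_prod_roots {f q : ℤ[X]}
    (h : IsCoprime (f.map (algebraMap ℤ ℚ)) (q.map (algebraMap ℤ ℚ))) :
    1 ≤ ‖(f.leadingCoeff : ℂ)‖ ^ q.natDegree *
      ((f.map (algebraMap ℤ ℂ)).roots.map fun z => ‖aeval z q‖).prod := by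
  have hres : resultant f q ≠ 0 := by
    have := resultant_ne_zero _ _ h
    rwa [natDegree_map_eq_of_injective Int.cast_injective,
      natDegree_map_eq_of_injective Int.cast_injective, resultant_map_map,
      map_ne_zero_iff _ (algebraMap ℤ ℚ).injective_int] at this
  have hprod : ((resultant f q : ℤ) : ℂ) = f.leadingCoeff ^ q.natDegree *
      ((f.map (algebraMap ℤ ℂ)).roots.map fun z => aeval z q).prod := by
    have := resultant_eq_prod_eval (f.map (algebraMap ℤ ℂ)) (q.map (algebraMap ℤ ℂ)) q.natDegree
      natDegree_map_le (IsAlgClosed.splits _)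
    rw [natDegree_map_eq_of_injective Int.cast_injective, resultant_map_map,
      leadingCoeff_map_of_injective Int.cast_injective] at this
    simp only [eval_map_algebraMap] at this
    exact this
  have hnorm := congrArg norm hprod
  rw [norm_mul, norm_pow, Complex.norm_intCast, ← normHom_apply (Multiset.prod _),
    map_multiset_prod, Multiset.map_map] at hnorm
  refine le_of_le_of_eq ?_ hnorm
  exact_mod_cast Int.one_le_abs hres

lemma norm_aeval_le {q : ℤ[X]} {N : ℕ} {H B : ℝ} {z : ℂ} (hq : q.natDegree ≤ N)
    (hH : ∀ k, |(q.coeff k : ℝ)| ≤ H) (hB : 1 ≤ B) (hz : ‖z‖ ≤ B) :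
    ‖aeval z q‖ ≤ (N + 1) * B ^ N * H := by
  rw [aeval_eq_sum_range' (Nat.lt_succ_of_le hq)]
  calc ‖∑ k ∈ Finset.range (N + 1), q.coeff k • z ^ k‖
      ≤ ∑ _ ∈ Finset.range (N + 1), H * B ^ N := by
        refine norm_sum_le_of_le _ fun k hk => ?_
        rw [zsmul_eq_mul, norm_mul, norm_pow, Complex.norm_intCast]
        refine mul_le_mul (hH k) ?_ (by positivity) ((abs_nonneg _).trans (hH k))
        exact (pow_le_pow_left₀ (norm_nonneg _) hz k).trans
          (pow_le_pow_right₀ hB (Nat.lt_succ_iff.mp (Finset.mem_range.mp hk)))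
    _ = (N + 1) * B ^ N * H := by
        rw [Finset.sum_const, Finset.card_range, nsmul_eq_mul]
        push_cast
        ring

lemma exists_int_poly_isCoprime {ξ : ℝ} (hξ : IsAlgebraic ℚ ξ) :
    ∃ f : ℤ[X], f ≠ 0 ∧ f.natDegree = (minpoly ℚ ξ).natDegree ∧ aeval ξ f = 0 ∧
      ∀ q : ℤ[X], aeval ξ q ≠ 0 →
        IsCoprime (f.map (algebraMap ℤ ℚ)) (q.map (algebraMap ℤ ℚ)) := by
  obtain ⟨b, hb, hf⟩ := IsLocalization.integerNormalization_spec (nonZeroDivisors ℤ) (minpoly ℚ ξ)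
  have hb0 : (b : ℚ) ≠ 0 := Int.cast_ne_zero.mpr (nonZeroDivisors.ne_zero hb)
  rw [← Int.cast_smul_eq_zsmul ℚ] at hf
  refine ⟨IsLocalization.integerNormalization (nonZeroDivisors ℤ) (minpoly ℚ ξ), ?_, ?_, ?_,
    fun q hq => ?_⟩
  · rw [Ne, IsLocalization.integerNormalization_eq_zero_iff le_rfl]
    exact minpoly.ne_zero hξ.isIntegral
  · rw [← natDegree_map_eq_of_injective (algebraMap ℤ ℚ).injective_int, hf,
      natDegree_smul _ hb0]
  · rw [← aeval_map_algebraMap ℚ, hf, map_smul, minpoly.aeval, smul_zero]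
  · rw [hf, smul_eq_C_mul, isCoprime_mul_unit_left_left (isUnit_C.mpr hb0.isUnit),
      (minpoly.irreducible hξ.isIntegral).coprime_iff_not_dvd, minpoly.dvd_iff,
      aeval_map_algebraMap]
    exact hq

theorem exists_pos_le_abs_aeval_mul_pow {ξ : ℝ} (hξ : IsAlgebraic ℚ ξ) (N : ℕ) :
    ∃ c > 0, ∀ (q : ℤ[X]) (H : ℝ), q.natDegree ≤ N → (∀ k, |(q.coeff k : ℝ)| ≤ H) →
      aeval ξ q ≠ 0 → c ≤ |aeval ξ q| * H ^ ((minpoly ℚ ξ).natDegree - 1) := by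
  obtain ⟨f, hf0, hdeg, hroot, hcop⟩ := exists_int_poly_isCoprime hξ
  have hf0' : f.map (algebraMap ℤ ℂ) ≠ 0 :=
    (Polynomial.map_ne_zero_iff (algebraMap ℤ ℂ).injective_int).mpr hf0
  obtain ⟨S, hS⟩ := Multiset.exists_cons_of_mem (show (ξ : ℂ) ∈ (f.map (algebraMap ℤ ℂ)).roots by
    rw [mem_roots hf0', IsRoot, eval_map_algebraMap]
    simpa [hroot] using aeval_algebraMap_apply ℂ ξ f)
  have hcard : S.card = (minpoly ℚ ξ).natDegree - 1 := by
    rw [← hdeg, ← natDegree_map_eq_of_injective (algebraMap ℤ ℂ).injective_int f,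
      (IsAlgClosed.splits _).natDegree_eq_card_roots, hS, Multiset.card_cons, Nat.add_sub_cancel]
  obtain ⟨B, hB, hSB⟩ : ∃ B : ℝ, 1 ≤ B ∧ ∀ z ∈ S, ‖z‖ ≤ B :=
    ⟨cauchyBound (f.map (algebraMap ℤ ℂ)), one_le_cauchyBound _, fun z hz =>
      (IsRoot.norm_lt_cauchyBound hf0' (isRoot_of_mem_roots
        (hS ▸ Multiset.mem_cons_of_mem hz))).le⟩
  have hlead : 1 ≤ ‖(f.leadingCoeff : ℂ)‖ := by
    rw [Complex.norm_intCast]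
    exact_mod_cast Int.one_le_abs (leadingCoeff_ne_zero.mpr hf0)
  refine ⟨(‖(f.leadingCoeff : ℂ)‖ ^ N * ((N + 1) * B ^ N) ^ S.card)⁻¹, by positivity,
    fun q H hq hH hqξ => ?_⟩
  have hξnorm : ‖aeval (ξ : ℂ) q‖ = |aeval ξ q| := by
    rw [← norm_eq_abs, ← Complex.norm_real]
    exact congrArg norm (aeval_algebraMap_apply ℂ ξ q)
  rw [inv_le_iff_one_le_mul₀' (by positivity), ← hcard]
  calc (1 : ℝ) ≤ ‖(f.leadingCoeff : ℂ)‖ ^ q.natDegree *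
        ((f.map (algebraMap ℤ ℂ)).roots.map fun z => ‖aeval z q‖).prod :=
        one_le_norm_leadingCoeff_pow_mul_prod_roots (hcop q hqξ)
    _ = ‖(f.leadingCoeff : ℂ)‖ ^ q.natDegree *
        (|aeval ξ q| * (S.map fun z => ‖aeval z q‖).prod) := by
        rw [hS, Multiset.map_cons, Multiset.prod_cons, hξnorm]
    _ ≤ ‖(f.leadingCoeff : ℂ)‖ ^ N * (|aeval ξ q| *
        (S.map fun _ => (N + 1) * B ^ N * H).prod) := by
        gcongr
        · exact mul_nonneg (abs_nonneg _) (Multiset.prod_nonneg fun _ h => by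
            obtain ⟨z, -, rfl⟩ := Multiset.mem_map.mp h
            exact norm_nonneg _)
        · exact Multiset.prod_map_le_prod_map₀ _ _ (fun _ _ => norm_nonneg _)
            fun z hz => norm_aeval_le hq hH hB (hSB z hz)
    _ = ‖(f.leadingCoeff : ℂ)‖ ^ N * ((N + 1) * B ^ N) ^ S.card *
        (|aeval ξ q| * H ^ S.card) := by
        rw [Multiset.map_const', Multiset.prod_replicate, mul_pow _ H]
        ring

end Liouville

section Integral

lemma integral_sq_sub_sq_pow_succ (x : ℝ) (k : ℕ) :
    (2 * k + 3) * ∫ t in (0 : ℝ)..x, (x ^ 2 - t ^ 2) ^ (k + 1) =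
      2 * (k + 1) * x ^ 2 * ∫ t in (0 : ℝ)..x, (x ^ 2 - t ^ 2) ^ k := by
  have hderiv (t : ℝ) : HasDerivAt (fun t => t * (x ^ 2 - t ^ 2) ^ (k + 1))
      ((2 * k + 3) * (x ^ 2 - t ^ 2) ^ (k + 1) -
        2 * (k + 1) * x ^ 2 * (x ^ 2 - t ^ 2) ^ k) t := by
    refine ((hasDerivAt_id t).mul
      (((hasDerivAt_pow 2 t).const_sub (x ^ 2)).pow (k + 1))).congr_deriv ?_
    rw [Nat.add_sub_cancel, id_eq, Pi.pow_apply]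
    push_cast
    ring
  have hint (c : ℝ) (m : ℕ) :
      IntervalIntegrable (fun t => c * (x ^ 2 - t ^ 2) ^ m) MeasureTheory.volume 0 x :=
    Continuous.intervalIntegrable (by fun_prop) _ _
  have := intervalIntegral.integral_eq_sub_of_hasDerivAt (fun t _ => hderiv t)
    ((hint _ _).sub (hint _ _))
  rw [intervalIntegral.integral_sub (hint _ _) (hint _ _), intervalIntegral.integral_const_mul,
    intervalIntegral.integral_const_mul] at this
  simpa [sub_eq_zero] using this

lemma integral_sq_sub_sq_pow (x : ℝ) (k : ℕ) : ∫ t in (0 : ℝ)..x, (x ^ 2 - t ^ 2) ^ k =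
    k ! * (PowerSeries.coeff k (kummerSeries ℝ) * (x ^ 2) ^ k * x) := by
  induction k with
  | zero => simp [constantCoeff_kummerSeries]
  | succ k ih =>
    refine mul_left_cancel₀ (by positivity : (2 * k + 3 : ℝ) ≠ 0) ?_
    rw [integral_sq_sub_sq_pow_succ, ih, Nat.factorial_succ]
    push_cast
    linear_combination -(k + 1) * k ! * x ^ 2 * (x ^ 2) ^ k * x * coeff_succ_kummerSeries (K := ℝ) k

theorem hasSum_coeff_kummerSeries_mul (x : ℝ) :
    HasSum (fun i => PowerSeries.coeff i (kummerSeries ℝ) * (x ^ 2) ^ i * x)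
      (exp (x ^ 2) * ∫ t in (0 : ℝ)..x, exp (-t ^ 2)) := by
  have hbound (t : ℝ) (ht : t ∈ Set.uIoc 0 x) : |x ^ 2 - t ^ 2| ≤ x ^ 2 := by
    have htx : |t| ≤ |x| := by simpa using Set.abs_sub_left_of_mem_uIcc (Set.uIoc_subset_uIcc ht)
    have := sq_le_sq.mpr htx
    rw [abs_of_nonneg (sub_nonneg.mpr this)]
    linarith [sq_nonneg t]
  have hsum : HasSum (fun i : ℕ => ∫ t in (0 : ℝ)..x, (x ^ 2 - t ^ 2) ^ i / i !)
      (∫ t in (0 : ℝ)..x, exp (x ^ 2 - t ^ 2)) := by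
    refine intervalIntegral.hasSum_integral_of_dominated_convergence (fun i _ => (x ^ 2) ^ i / i !)
      (fun i => Continuous.aestronglyMeasurable (by fun_prop))
      (fun i => .of_forall fun t ht => ?_) (.of_forall fun _ _ => summable_pow_div_factorial _)
      intervalIntegrable_const (.of_forall fun t _ => ?_)
    · rw [norm_div, norm_pow, norm_eq_abs, norm_natCast]
      gcongr
      exact hbound t ht
    · rw [exp_eq_exp_ℝ]
      exact NormedSpace.expSeries_div_hasSum_exp _
  convert hsum using 2 with i
  · rw [intervalIntegral.integral_div, integral_sq_sub_sq_pow, mul_div_cancel_left₀ _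
      (Nat.cast_ne_zero.mpr i.factorial_ne_zero)]
  · rw [← intervalIntegral.integral_const_mul]
    simp only [← exp_add, ← sub_eq_add_neg]

end Integral

section Height

variable {R : Type*} [SeminormedCommRing R]

lemma norm_natCast_mul_le_of_ne_zero_imp {a : R} {h : ℝ} {m M : ℕ} (ha : ‖a‖ ≤ h)
    (hm : a ≠ 0 → m ≤ M) : ‖(m : R) * a‖ ≤ M * h := by
  have : 0 ≤ h := (norm_nonneg _).trans ha
  rcases eq_or_ne a 0 with rfl | ha0
  · rw [mul_zero, norm_zero]
    positivity
  · rw [← nsmul_eq_mul]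
    refine (norm_nsmul_le ..).trans ?_
    gcongr
    exact hm ha0

lemma coeff_coeff_kummerDeriv (P : R[X][Y]) (k j : ℕ) :
    ((kummerDeriv R P).coeff k).coeff j = ((2 * j : ℕ) : R) * (P.coeff k).coeff j +
      ((2 * k : ℕ) : R) * (X * P.coeff k).coeff j - (k : R) * (P.coeff k).coeff j +
      ((k + 1 : ℕ) : R) * (P.coeff (k + 1)).coeff j := by
  have hsplit : (kummerDeriv R P).coeff k = C 2 * (X * derivative (P.coeff k)) +
      C (2 * k : R) * (X * P.coeff k) - C (k : R) * P.coeff k +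
      C (k + 1 : R) * P.coeff (k + 1) := by
    rw [coeff_kummerDeriv]
    simp only [map_add, map_mul, map_natCast, map_ofNat, map_one]
    ring
  rw [hsplit]
  simp only [coeff_add, coeff_sub, coeff_C_mul, coeff_X_mul_derivative]
  push_cast
  ring

lemma norm_coeff_coeff_kummerDeriv_le {P : R[X][Y]} {d n : ℕ} {h : ℝ} (hd : P.natDegree ≤ d)
    (hn : ∀ k, (P.coeff k).natDegree ≤ n) (hh : ∀ k j, ‖(P.coeff k).coeff j‖ ≤ h) (k j : ℕ) :
    ‖((kummerDeriv R P).coeff k).coeff j‖ ≤ (2 * n + 4 * d + 1) * h := by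
  have h0 : 0 ≤ h := (norm_nonneg _).trans (hh 0 0)
  have hk {i : ℕ} (hi : P.coeff i ≠ 0) : i ≤ d := (le_natDegree_of_ne_zero hi).trans hd
  have hcoeff {p : R[X]} {l : ℕ} (hl : p.coeff l ≠ 0) : p ≠ 0 := by
    rintro rfl
    exact hl (coeff_zero l)
  have hX : ‖(X * P.coeff k).coeff j‖ ≤ h := by
    cases j with
    | zero => rwa [coeff_X_mul_zero, norm_zero]
    | succ j => rw [coeff_X_mul]; exact hh k j
  have h₁ : ‖((2 * j : ℕ) : R) * (P.coeff k).coeff j‖ ≤ (2 * n : ℕ) * h :=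
    norm_natCast_mul_le_of_ne_zero_imp (hh k j) fun hj =>
      Nat.mul_le_mul_left 2 ((le_natDegree_of_ne_zero hj).trans (hn k))
  have h₂ : ‖((2 * k : ℕ) : R) * (X * P.coeff k).coeff j‖ ≤ (2 * d : ℕ) * h :=
    norm_natCast_mul_le_of_ne_zero_imp hX fun hj =>
      Nat.mul_le_mul_left 2 (hk (right_ne_zero_of_mul (hcoeff hj)))
  have h₃ : ‖(k : R) * (P.coeff k).coeff j‖ ≤ d * h :=
    norm_natCast_mul_le_of_ne_zero_imp (hh k j) fun hj => hk (hcoeff hj)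
  have h₄ : ‖((k + 1 : ℕ) : R) * (P.coeff (k + 1)).coeff j‖ ≤ d * h :=
    norm_natCast_mul_le_of_ne_zero_imp (hh (k + 1) j) fun hj => hk (hcoeff hj)
  calc ‖((kummerDeriv R P).coeff k).coeff j‖
      ≤ (2 * n : ℕ) * h + (2 * d : ℕ) * h + d * h + d * h := by
        rw [coeff_coeff_kummerDeriv]
        exact norm_add_le_of_le (norm_sub_le_of_le (norm_add_le_of_le h₁ h₂) h₃) h₄
    _ ≤ (2 * n + 4 * d + 1) * h := by
        push_cast
        linarith

lemma norm_coeff_coeff_iterate_kummerDeriv_le {P : R[X][Y]} {d n : ℕ} {h : ℝ}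
    (hd : P.natDegree ≤ d) (hn : ∀ k, (P.coeff k).natDegree ≤ n)
    (hh : ∀ k j, ‖(P.coeff k).coeff j‖ ≤ h) (s k j : ℕ) :
    ‖(((kummerDeriv R)^[s] P).coeff k).coeff j‖ ≤ (2 * (n + s) + 4 * d + 1) ^ s * h := by
  have h0 : 0 ≤ h := (norm_nonneg _).trans (hh 0 0)
  induction s generalizing k j with
  | zero => simpa using hh k j
  | succ s ih =>
    rw [Function.iterate_succ_apply']
    refine (norm_coeff_coeff_kummerDeriv_le ((natDegree_iterate_kummerDeriv_le P s).trans hd)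
      (natDegree_coeff_iterate_kummerDeriv_le hn s) ih k j).trans ?_
    rw [← mul_assoc, pow_succ']
    push_cast
    gcongr <;> linarith

end Height

section ClearDenominators

variable {a b : ℤ} {N : ℕ} {M h : ℝ}

lemma exists_int_eq_pow_mul_aeval (hb : b ≠ 0) (ha : |(a : ℝ)| ≤ M) (hbM : |(b : ℝ)| ≤ M)
    {p : ℤ[X]} (hN : p.natDegree ≤ N) (hh : ∀ j, |(p.coeff j : ℝ)| ≤ h) :
    ∃ c : ℤ, |(c : ℝ)| ≤ (N + 1) * M ^ N * h ∧ (c : ℝ) = b ^ N * aeval (a / b : ℝ) p := by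
  have hM : 0 ≤ M := (abs_nonneg _).trans ha
  have h0 : 0 ≤ h := (abs_nonneg _).trans (hh 0)
  refine ⟨∑ j ∈ Finset.range (N + 1), p.coeff j * (a ^ j * b ^ (N - j)), ?_, ?_⟩
  · calc |((∑ j ∈ Finset.range (N + 1), p.coeff j * (a ^ j * b ^ (N - j)) : ℤ) : ℝ)|
        ≤ ∑ _ ∈ Finset.range (N + 1), h * M ^ N := by
          push_cast
          refine (Finset.abs_sum_le_sum_abs _ _).trans (Finset.sum_le_sum fun j hj => ?_)
          rw [← pow_mul_pow_sub M (Finset.mem_range_succ_iff.mp hj), abs_mul, abs_mul, abs_pow,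
            abs_pow]
          gcongr
          exact hh j
      _ = (N + 1) * M ^ N * h := by simp [mul_comm, mul_assoc]
  · rw [aeval_eq_sum_range' (Nat.lt_succ_of_le hN), Finset.mul_sum]
    push_cast
    refine Finset.sum_congr rfl fun j hj => ?_
    rw [← pow_sub_mul_pow (b : ℝ) (Finset.mem_range_succ_iff.mp hj), zsmul_eq_mul, div_pow]
    field_simp

lemma exists_int_poly_aeval_eq (hb : b ≠ 0) (ha : |(a : ℝ)| ≤ M) (hbM : |(b : ℝ)| ≤ M)
    {P : ℤ[X][Y]} (hN : ∀ k, (P.coeff k).natDegree ≤ N)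
    (hh : ∀ k j, |((P.coeff k).coeff j : ℝ)| ≤ h) :
    ∃ q : ℤ[X], q.natDegree ≤ P.natDegree ∧ (∀ k, |(q.coeff k : ℝ)| ≤ (N + 1) * M ^ N * h) ∧
      ∀ y : ℝ, aeval y q =
        b ^ N * evalEval (a / b : ℝ) y (P.map (mapRingHom (Int.castRingHom ℝ))) := by
  choose c hc hceval using fun k => exists_int_eq_pow_mul_aeval hb ha hbM (hN k) (hh k)
  refine ⟨∑ k ∈ Finset.range (P.natDegree + 1), monomial k (c k), ?_, fun k => ?_, fun y => ?_⟩
  · exact natDegree_sum_le_of_forall_le _ _ fun k hk =>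
      (natDegree_monomial_le _).trans (Finset.mem_range_succ_iff.mp hk)
  · rw [finsetSum_coeff]
    simp only [coeff_monomial, Finset.sum_ite_eq']
    split_ifs
    · exact hc k
    · rw [Int.cast_zero, abs_zero]
      exact (abs_nonneg _).trans (hc 0)
  · rw [map_sum, evalEval, eval_map, eval₂_eq_sum_range, eval_finsetSum, Finset.mul_sum]
    refine Finset.sum_congr rfl fun k _ => ?_
    rw [aeval_monomial, eval_mul, eval_pow, eval_C, ← mul_assoc, coe_mapRingHom, eval_map]
    exact congrArg (· * y ^ k) (hceval k)

end ClearDenominators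

section Growth

/-- `f` has growth order at most `κ`: up to an exponential factor, `f u` is at most `u ^ (κ u)`,
or equivalently `(u !) ^ κ`. A negative `κ` expresses superexponential decay. -/
def GrowsAtMost (κ : ℤ) (f : ℕ → ℝ) : Prop :=
  ∃ C : ℝ, ∀ u : ℕ, 0 < u → |f u| ≤ C ^ u * (u : ℝ) ^ (κ * u)

variable {f g : ℕ → ℝ} {κ μ : ℤ}

lemma GrowsAtMost.mono (hf : GrowsAtMost κ f) (h : ∀ u, 0 < u → |g u| ≤ |f u|) :
    GrowsAtMost κ g :=
  let ⟨C, hC⟩ := hf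
  ⟨C, fun u hu => (h u hu).trans (hC u hu)⟩

lemma GrowsAtMost.mul (hf : GrowsAtMost κ f) (hg : GrowsAtMost μ g) :
    GrowsAtMost (κ + μ) fun u => f u * g u := by
  obtain ⟨C, hC⟩ := hf
  obtain ⟨D, hD⟩ := hg
  refine ⟨C * D, fun u hu => ?_⟩
  have hu' : (u : ℝ) ≠ 0 := by positivity
  rw [abs_mul, mul_pow, add_mul, zpow_add₀ hu', mul_mul_mul_comm]
  exact mul_le_mul (hC u hu) (hD u hu) (abs_nonneg _) ((abs_nonneg _).trans (hC u hu))

lemma GrowsAtMost.pow (hf : GrowsAtMost κ f) (k : ℕ) :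
    GrowsAtMost (k * κ) fun u => f u ^ k := by
  obtain ⟨C, hC⟩ := hf
  refine ⟨C ^ k, fun u hu => ?_⟩
  rw [abs_pow, mul_assoc, mul_comm (k : ℤ), zpow_mul, zpow_natCast, pow_right_comm, ← mul_pow]
  exact pow_le_pow_left₀ (abs_nonneg _) (hC u hu) k

lemma growsAtMost_const_pow (M : ℝ) (k m : ℕ) : GrowsAtMost 0 fun u => M ^ (k * u + m) := by
  refine ⟨(|M| + 1) ^ (k + m), fun u hu => ?_⟩
  rw [zero_mul, zpow_zero, mul_one, abs_pow, ← pow_mul]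
  have hle : k * u + m ≤ (k + m) * u := by nlinarith
  calc |M| ^ (k * u + m) ≤ (|M| + 1) ^ (k * u + m) := by gcongr; linarith
    _ ≤ (|M| + 1) ^ ((k + m) * u) := by
      gcongr
      linarith [abs_nonneg M]

lemma growsAtMost_linear_pow (a b k m : ℕ) :
    GrowsAtMost k fun u => ((a * u + b : ℕ) : ℝ) ^ (k * u + m) := by
  obtain ⟨C, hC⟩ := growsAtMost_const_pow (a + b : ℕ) k m
  refine ⟨C * 2 ^ m, fun u hu => ?_⟩
  have hC' : ((a + b : ℕ) : ℝ) ^ (k * u + m) ≤ C ^ u := by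
    simpa only [zero_mul, zpow_zero, mul_one, abs_pow, Nat.abs_cast] using hC u hu
  have hbase : ((a * u + b : ℕ) : ℝ) ≤ (a + b : ℕ) * u := by
    exact_mod_cast (by nlinarith : a * u + b ≤ (a + b) * u)
  have htwo : (u : ℝ) ^ m ≤ (2 ^ m) ^ u := by
    rw [← pow_mul, mul_comm, pow_mul]
    gcongr
    exact_mod_cast u.lt_two_pow_self.le
  have hC0 : 0 ≤ C ^ u := le_trans (by positivity) hC'
  calc |((a * u + b : ℕ) : ℝ) ^ (k * u + m)|
      = ((a * u + b : ℕ) : ℝ) ^ (k * u + m) := abs_of_nonneg (by positivity)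
    _ ≤ ((a + b : ℕ) * u) ^ (k * u + m) := by gcongr
    _ = ((a + b : ℕ) : ℝ) ^ (k * u + m) * (u ^ m * u ^ (k * u)) := by
      rw [mul_pow, pow_add (u : ℝ), mul_comm ((u : ℝ) ^ (k * u))]
    _ ≤ C ^ u * ((2 ^ m) ^ u * u ^ (k * u)) := by gcongr
    _ = (C * 2 ^ m) ^ u * (u : ℝ) ^ ((k : ℤ) * u) := by
      rw [mul_pow, mul_assoc, ← Nat.cast_mul, zpow_natCast]

lemma growsAtMost_factorial (k m : ℕ) : GrowsAtMost k fun u => ((k * u + m)! : ℝ) :=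
  (growsAtMost_linear_pow k m k m).mono fun u _ => by
    rw [Nat.abs_cast, abs_of_nonneg (by positivity)]
    exact_mod_cast Nat.factorial_le_pow _

lemma growsAtMost_pow_div_factorial (y : ℝ) (k : ℕ) :
    GrowsAtMost (-k) fun u => y ^ (k * u) / (k * u)! := by
  refine ⟨exp |y|, fun u hu => ?_⟩
  have hpow : (0 : ℝ) < u ^ (k * u) := by positivity
  rw [neg_mul, zpow_neg, ← Nat.cast_mul, zpow_natCast, ← div_eq_mul_inv, le_div_iff₀ hpow,
    abs_div, abs_pow, Nat.abs_cast, div_mul_eq_mul_div, ← mul_pow, ← exp_nat_mul, mul_comm (u : ℝ)]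
  exact pow_div_factorial_le_exp _ (mul_nonneg (abs_nonneg y) u.cast_nonneg) _

lemma not_growsAtMost_const {c : ℝ} (hc : c ≠ 0) (hκ : κ < 0) : ¬ GrowsAtMost κ fun _ => c := by
  rintro ⟨C, hC⟩
  have hbound (u : ℕ) (hu : 0 < u) : |c| ≤ |C| ^ u / u ! := by
    have h1 : (1 : ℝ) ≤ u := by exact_mod_cast hu
    calc |c| ≤ C ^ u * (u : ℝ) ^ (κ * u) := hC u hu
      _ ≤ |C| ^ u * (u : ℝ) ^ (-u : ℤ) := by
        rw [← abs_pow]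
        gcongr
        · exact le_abs_self _
        · nlinarith
      _ ≤ |C| ^ u / u ! := by
        rw [zpow_neg, zpow_natCast, ← div_eq_mul_inv]
        gcongr
        exact_mod_cast Nat.factorial_le_pow u
  have hlim := FloorSemiring.tendsto_pow_div_factorial_atTop |C|
  refine (abs_pos.mpr hc).not_ge (ge_of_tendsto hlim ?_)
  filter_upwards [Filter.eventually_gt_atTop 0] with u hu using hbound u hu

/-- Liouville's argument: if `ξ` were algebraic of degree `d + 1`, the product `ε u * H u ^ d`
would be bounded below by a positive constant. -/
theorem transcendental_of_growsAtMost {ξ : ℝ}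
    (h : ∀ d : ℕ, ∃ (N : ℕ) (κ μ : ℤ) (H ε : ℕ → ℝ), μ + d * κ < 0 ∧ GrowsAtMost κ H ∧
      GrowsAtMost μ ε ∧ ∀ u, 0 < u → ∃ q : ℤ[X], q.natDegree ≤ N ∧
        (∀ k, |(q.coeff k : ℝ)| ≤ H u) ∧ aeval ξ q ≠ 0 ∧ |aeval ξ q| ≤ ε u) :
    Transcendental ℚ ξ := by
  intro hξ
  obtain ⟨N, κ, μ, H, ε, hneg, hH, hε, hq⟩ := h ((minpoly ℚ ξ).natDegree - 1)
  obtain ⟨c, hc, hliouville⟩ := exists_pos_le_abs_aeval_mul_pow hξ N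
  refine not_growsAtMost_const hc.ne' hneg ((hε.mul (hH.pow _)).mono fun u hu => ?_)
  obtain ⟨q, hdeg, hcoeff, hne, hle⟩ := hq u hu
  have hH0 : 0 ≤ H u := (abs_nonneg _).trans (hcoeff 0)
  rw [abs_of_pos hc]
  refine (hliouville q (H u) hdeg hcoeff hne).trans (le_trans ?_ (le_abs_self _))
  gcongr

end Growth

section Transcendence

lemma exists_int_poly_abs_aeval_le {r : ℚ} (hr : r ≠ 0) {ξ : ℝ}
    (hξ : HasSum (fun i => PowerSeries.coeff i (kummerSeries ℝ) * (r : ℝ) ^ i) ξ)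
    {P : ℤ[X][Y]} (hP : P ≠ 0) {d n E t N : ℕ} {H A : ℝ} (hA : 0 ≤ A)
    (hd : P.natDegree ≤ d) (hn : ∀ k, (P.coeff k).natDegree ≤ n)
    (hh : ∀ k j, |((P.coeff k).coeff j : ℝ)| ≤ H)
    (hE : PowerSeries.X ^ E ∣ kummerSubst ℝ (P.map (mapRingHom (Int.castRingHom ℝ))))
    (hH : ∀ i, i ! * |PowerSeries.coeff i (kummerSubst ℝ
      (P.map (mapRingHom (Int.castRingHom ℝ))))| ≤ H * A ^ i)
    (ht : (d + 1) * (n + d) + d ≤ E + t) (hN : n + t ≤ N) :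
    ∃ q : ℤ[X], q.natDegree ≤ d ∧
      (∀ k, |(q.coeff k : ℝ)| ≤
        (N + 1) * max |(r.num : ℝ)| r.den ^ N * ((2 * N + 4 * d + 1) ^ t * H)) ∧
      aeval ξ q ≠ 0 ∧
      |aeval ξ q| ≤ max |(r.num : ℝ)| r.den ^ N * (t ! * H *
        ((A * exp 2 * |(r : ℝ)|) ^ E / E ! * exp (A * exp 2 * |(r : ℝ)|))) := by
  have hH0 : 0 ≤ H := (abs_nonneg _).trans (hh 0 0)
  have hden : (r.den : ℤ) ≠ 0 := by exact_mod_cast r.den_ne_zero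
  have hnum : (r.num / (r.den : ℤ) : ℝ) = r := by exact_mod_cast r.num_div_den
  set PR := P.map (mapRingHom (Int.castRingHom ℝ)) with hPR
  have hPR0 : PR ≠ 0 :=
    (Polynomial.map_ne_zero_iff (map_injective _ Int.cast_injective)).mpr hP
  obtain ⟨s, hs, hne⟩ := exists_evalEval_iterate_kummerDeriv_ne_zero (Rat.cast_ne_zero.mpr hr) ξ
    hPR0 (natDegree_map_le.trans hd)
    (fun k => by rw [hPR, coeff_map]; exact natDegree_map_le.trans (hn k)) hE ht
  obtain ⟨q, hqd, hqh, hq⟩ := exists_int_poly_aeval_eq (a := r.num) hden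
    (le_max_left _ (r.den : ℝ)) (by rw [Int.cast_natCast, Nat.abs_cast]; exact le_max_right _ _)
    (N := N) (fun k => (natDegree_coeff_iterate_kummerDeriv_le hn s k).trans (by omega))
    (fun k j => norm_coeff_coeff_iterate_kummerDeriv_le hd hn hh s k j)
  replace hq := hq ξ
  rw [← iterate_kummerDeriv_map, hnum, ← hPR] at hq
  refine ⟨q, hqd.trans ((natDegree_iterate_kummerDeriv_le P s).trans hd),
    fun k => (hqh k).trans ?_, ?_, ?_⟩
  · have hns : (n : ℝ) + s ≤ N := by exact_mod_cast (by omega : n + s ≤ N)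
    gcongr
    calc (2 * (n + s) + 4 * d + 1 : ℝ) ^ s ≤ (2 * N + 4 * d + 1) ^ s := by gcongr
      _ ≤ (2 * N + 4 * d + 1) ^ t := by
        gcongr
        linarith [N.cast_nonneg (α := ℝ), d.cast_nonneg (α := ℝ)]
  · rw [hq]
    exact mul_ne_zero (pow_ne_zero _ (Int.cast_ne_zero.mpr hden)) hne
  · rw [hq, abs_mul, abs_pow, Int.cast_natCast, Nat.abs_cast]
    refine mul_le_mul (by gcongr; exact le_max_right _ _)
      ((abs_evalEval_iterate_kummerDeriv_le hA hξ hE hH s).trans ?_) (abs_nonneg _) (by positivity)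
    gcongr

theorem transcendental_of_hasSum_kummerSeries {r : ℚ} (hr : r ≠ 0) {ξ : ℝ}
    (hξ : HasSum (fun i => PowerSeries.coeff i (kummerSeries ℝ) * (r : ℝ) ^ i) ξ) :
    Transcendental ℚ ξ := by
  refine transcendental_of_growsAtMost fun d => ?_
  obtain ⟨B, haux⟩ := exists_auxPoly (d + 1)
  set m := (d + 1) ^ 2 + 2 * (d + 1) with hm
  set M := max |(r.num : ℝ)| r.den
  set y := 2 * ((d + 1 : ℕ) + 1) * exp 2 * |(r : ℝ)|
  have hM : GrowsAtMost 0 fun u => M ^ ((d + 4) * u + m) := growsAtMost_const_pow M (d + 4) m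
  have hN : GrowsAtMost 0 fun u => (((d + 4) * u + m : ℕ) + 1 : ℝ) := by
    simpa [add_assoc] using growsAtMost_linear_pow (d + 4) (m + 1) 0 1
  have hderiv : GrowsAtMost 1 fun u =>
      (2 * ((d + 4) * u + m : ℕ) + 4 * (d + 1 : ℕ) + 1 : ℝ) ^ (u + m) := by
    convert growsAtMost_linear_pow (2 * (d + 4)) (2 * m + 4 * (d + 1) + 1) 1 m using 3
    · rw [Nat.cast_one]
    · push_cast
      ring
    · rw [one_mul]
  have haux' : GrowsAtMost (d + 3) fun u => (((d + 3) * u)! * B ^ u : ℝ) := by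
    simpa using (growsAtMost_factorial (d + 3) 0).mul (growsAtMost_const_pow B 1 0)
  have hfact : GrowsAtMost 1 fun u => ((u + m)! : ℝ) := by
    simpa using growsAtMost_factorial 1 m
  have htail := growsAtMost_pow_div_factorial y ((d + 1) ^ 2 + 3 * (d + 1) + 1)
  have hexp : GrowsAtMost 0 fun _ => exp y := by simpa using growsAtMost_const_pow (exp y) 0 1
  refine ⟨d + 1, _, _, _, _, ?_, (hN.mul hM).mul (hderiv.mul haux'),
    hM.mul ((hfact.mul haux').mul (htail.mul hexp)), fun u hu => ?_⟩
  · push_cast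
    linarith
  · obtain ⟨P, hP0, hPd, hPn, hPh, hPE, hPH⟩ := haux u hu
    exact exists_int_poly_abs_aeval_le hr hξ hP0 (by positivity) hPd hPn hPh hPE hPH
      (by rw [hm]; apply le_of_eq; ring) (by apply le_of_eq; ring)

lemma transcendental_mul_iff_of_isAlgebraic {a ξ : ℝ} (ha : IsAlgebraic ℚ a) (ha0 : a ≠ 0) :
    Transcendental ℚ (a * ξ) ↔ Transcendental ℚ ξ :=
  not_congr ⟨fun h => by simpa [ha0] using ha.inv.mul h, ha.mul⟩

lemma isAlgebraic_of_sq_eq_ratCast {x : ℝ} {r : ℚ} (h : x ^ 2 = r) : IsAlgebraic ℚ x :=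
  .of_pow two_pos (h ▸ isAlgebraic_ratCast ℚ r)

theorem transcendental_error_sum_exp_general {x : ℝ} (hx : x ≠ 0) {r : ℚ} (hr : x ^ 2 = r) :
    Transcendental ℚ (exp (x ^ 2) * ∫ t in (0 : ℝ)..x, exp (-t ^ 2)) := by
  have hr0 : r ≠ 0 := Rat.cast_ne_zero.mp (hr ▸ pow_ne_zero 2 hx)
  rw [← transcendental_mul_iff_of_isAlgebraic (isAlgebraic_of_sq_eq_ratCast hr).inv
    (inv_ne_zero hx)]
  refine transcendental_of_hasSum_kummerSeries hr0 ?_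
  simpa only [hr, mul_comm x⁻¹ (_ * x), mul_inv_cancel_right₀ hx] using
    (hasSum_coeff_kummerSeries_mul x).mul_left x⁻¹

end Transcendence

/-- **Transcendence of error-sum values of the exponential function.**
For every integer `l ≥ 2`, the number `(2 e^{1/l}/√l) ∫_0^{1/√l} e^{-t²} dt` is
transcendental over `ℚ`; moreover `e ∫_0^1 e^{-t²} dt` is transcendental over `ℚ`. -/
theorem transcendental_error_sum_exp :
    (∀ l : ℕ, 2 ≤ l →
      Transcendental ℚ
        ((2 * Real.exp (1 / l) / Real.sqrt l) *
          ∫ t in (0:ℝ)..(1 / Real.sqrt l), Real.exp (-t ^ 2))) ∧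
    Transcendental ℚ (Real.exp 1 * ∫ t in (0:ℝ)..1, Real.exp (-t ^ 2)) := by
  refine ⟨fun l hl => ?_, ?_⟩
  · have hl0 : 0 < √(l : ℝ) := sqrt_pos.mpr (by exact_mod_cast two_pos.trans_le hl)
    have hinv : (1 / √(l : ℝ)) ^ 2 = 1 / l := by rw [div_pow, one_pow, sq_sqrt l.cast_nonneg]
    have halg : IsAlgebraic ℚ (2 / √(l : ℝ)) :=
      isAlgebraic_of_sq_eq_ratCast (r := 4 / l) <| by
        rw [div_pow, sq_sqrt l.cast_nonneg]
        norm_num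
    have htrans := transcendental_error_sum_exp_general (one_div_pos.mpr hl0).ne' (r := 1 / l)
      (by rw [hinv]; norm_num)
    rw [← transcendental_mul_iff_of_isAlgebraic halg (by positivity), hinv] at htrans
    rwa [← mul_assoc, div_mul_eq_mul_div] at htrans
  · simpa using transcendental_error_sum_exp_general one_ne_zero (r := 1) (by simp)
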